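/- Let n >= 3 and i = 3. For every nonnegative integer m, S(D, m*omega_3) equals the floor(m/2)-fold Minkowski sum S(D, 2*omega_3) + ... + S(D, 2*omega_3), plus one additional summand S(D, omega_3) when m is odd (the 0-fold Minkowski sum is {0}). -/

import Mathlib

open scoped Pointwise

/-- A single step in a Dyck path: `α_{p,q} → α_{p,q+1}` or `α_{p,q} → α_{p+1,q}`. -/
def RootStep (a b : ℕ × ℕ) : Prop :=
  (b.1 = a.1 ∧ b.2 = a.2 + 1) ∨ (b.1 = a.1 + 1 ∧ b.2 = a.2)

/-- `inR n i (p,q)` means that `α_{p,q}` is a positive root of `B_n`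
(`1 ≤ p ≤ n`, `p ≤ q ≤ 2n-p`) belonging to `R_i^+`, i.e. `p ≤ i ≤ q`. -/
def inR (n i : ℕ) (a : ℕ × ℕ) : Prop :=
  1 ≤ a.1 ∧ a.1 ≤ i ∧ i ≤ a.2 ∧ a.1 + a.2 ≤ 2 * n

/-- A type 1 Dyck path for `R_i^+` of `B_n`, recorded as the list of its roots. -/
def IsType1 (n i : ℕ) (L : List (ℕ × ℕ)) : Prop :=
  L ≠ [] ∧ L.Chain' RootStep ∧ (∀ x ∈ L, inR n i x) ∧
    ((L.head? = some (1, i) ∧ L.getLast? = some (i, 2 * n - i - 1)) ∨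
     (L.head? = some (1, i + 1) ∧ L.getLast? = some (i, 2 * n - i)))

/-- A type 2 (double) Dyck path for `R_i^+` of `B_n`, recorded as the pair of lists of
roots of its two constituent single paths. -/
def IsType2 (n i : ℕ) (L1 L2 : List (ℕ × ℕ)) : Prop :=
  ∃ j : ℕ, 1 ≤ j ∧ j < i ∧
    L1 ≠ [] ∧ L2 ≠ [] ∧ L1.Chain' RootStep ∧ L2.Chain' RootStep ∧
    (∀ x ∈ L1, inR n i x) ∧ (∀ x ∈ L2, inR n i x) ∧
    L1.head? = some (1, i) ∧ L2.head? = some (2, i) ∧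
    L1.getLast? = some (j, 2 * n - j) ∧ L2.getLast? = some (j + 1, 2 * n - j - 1) ∧
    (∀ x, ¬(x ∈ L1 ∧ x ∈ L2))

/-- The constant `c_i`: `1` if `i = 1` or `i = n`, and `2` if `2 ≤ i ≤ n-1`. -/
def cB (n i : ℕ) : ℕ := if i = 1 ∨ i = n then 1 else 2

/-- `SD n i m` is the set `S(D, m·ω_i)` of lattice points of the Dyck-path polytope:
multi-exponents `s` supported on `R_i^+` with `∑_{β ∈ p} s_β ≤ m` for every type 1
Dyck path `p` and `∑_{β ∈ p} s_β ≤ m·c_i` for every type 2 Dyck path `p`.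
(Elements of a Dyck path are pairwise distinct, so summation over the recording
lists agrees with summation over the underlying set of roots.) -/
def SD (n i m : ℕ) : Set ((ℕ × ℕ) → ℕ) :=
  {s | (∀ β, ¬ inR n i β → s β = 0) ∧
       (∀ L, IsType1 n i L → (L.map s).sum ≤ m) ∧
       (∀ L1 L2, IsType2 n i L1 L2 → ((L1 ++ L2).map s).sum ≤ m * cB n i)}

/-!
Levels add up under Minkowski sums, so the point is to split off from every `s ∈ S(D, m·ω₃)` with
`m > 0` a summand of level `1` or `2`.

Let `n ≥ 4`. The type 2 inequality with `j = 1` is the only one involving `α_{1,2n-1}`, and the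
entry there can be distributed among the summands at the end. Suppose first that some other type 2
path contains all of the support of `s` in the remaining roots. Read the entries of `s` as lengths
of jobs, each of which has to wait for its left and its upper neighbour. By the type 1 inequalities
there is a schedule in which each of the two families of type 1 paths takes time at most `m`, so
rescaling time by `x ↦ ⌊x / m⌋` splits off level `1` from these inequalities; the type 2
inequalities follow after redistributing the entries that lie on no type 1 path.

Otherwise rows `3`, `2` and `1` have positive entries in columns `v < w < u`. The indicator of such
a triple, chosen as close together as possible, has level `1` and meets every path whose inequality
is tight, unless `w` is the last column of row `2` that the type 1 paths reach and row `1` to the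
left of it already has sum `m`. In this residual case two entries split off at level `1` unless
certain inequalities are all tight, and then five entries form a summand of level `2`. This is why
blocks of level `2` are needed.

For `n = 3` all constraints come down to two type 2 paths which share all but one of their entries,
and a summand of level `1` always splits off.
-/

/-- `s` is the sum of an element of level `r ∈ {1, 2}` and one of the complementary level `m - r`,
where `P k t` says that `t` has level `k`. -/
def Splits {M : Type*} [Add M] (P : ℕ → M → Prop) (m : ℕ) (s : M) : Prop :=
  ∃ r k s₁ s₂, (r = 1 ∨ r = 2) ∧ r + k = m ∧ s₁ + s₂ = s ∧ P r s₁ ∧ P k s₂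

section BuildingBlocks

variable {M : Type*} [AddCommMonoid M] {S : ℕ → Set M}

/-- The Minkowski sum of `⌊m/2⌋` copies of `S 2` and, for odd `m`, one copy of `S 1`. -/
def buildingBlocks (S : ℕ → Set M) (m : ℕ) : Set M :=
  (∑ _j ∈ Finset.range (m / 2), S 2) + if m % 2 = 1 then S 1 else 0

theorem buildingBlocks_add_two (S : ℕ → Set M) (m : ℕ) :
    buildingBlocks S (m + 2) = buildingBlocks S m + S 2 := by
  rw [buildingBlocks, buildingBlocks, Nat.add_div_right m two_pos, Finset.sum_range_succ,
    Nat.add_mod_right, add_right_comm]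

theorem buildingBlocks_add_one_subset (h : S 1 + S 1 ⊆ S 2) (m : ℕ) :
    buildingBlocks S m + S 1 ⊆ buildingBlocks S (m + 1) := by
  obtain hm | hm := Nat.mod_two_eq_zero_or_one m
  · rw [buildingBlocks, buildingBlocks, if_neg (by omega), if_pos (by omega), add_zero,
      show (m + 1) / 2 = m / 2 by omega]
  · rw [buildingBlocks, buildingBlocks, if_pos hm, if_neg (by omega), add_zero,
      show (m + 1) / 2 = m / 2 + 1 by omega, Finset.sum_range_succ, add_assoc]
    exact Set.add_subset_add_left h

theorem buildingBlocks_subset (h0 : S 0 = 0) (hadd : ∀ k l, S k + S l ⊆ S (k + l)) (m : ℕ) :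
    buildingBlocks S m ⊆ S m := by
  induction m using Nat.twoStepInduction with
  | zero => simp [buildingBlocks, h0]
  | one => simp [buildingBlocks]
  | more m ih _ =>
    rw [buildingBlocks_add_two]
    exact (Set.add_subset_add_right ih).trans (hadd m 2)

theorem subset_buildingBlocks (h0 : S 0 = 0) (hadd : S 1 + S 1 ⊆ S 2)
    (hsplit : ∀ m, 0 < m → ∀ s ∈ S m, Splits (fun k t => t ∈ S k) m s) (m : ℕ) :
    S m ⊆ buildingBlocks S m := by
  induction m using Nat.strong_induction_on with
  | _ m ih =>
    intro s hs
    obtain rfl | hm := Nat.eq_zero_or_pos m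
    · simpa [buildingBlocks, h0] using hs
    obtain ⟨r, k, s₁, s₂, hr, rfl, rfl, h₁, h₂⟩ := hsplit m hm s hs
    have hrest := ih k (by omega) h₂
    rw [add_comm s₁, add_comm r]
    obtain rfl | rfl := hr
    · exact buildingBlocks_add_one_subset hadd k (Set.add_mem_add hrest h₁)
    · rw [buildingBlocks_add_two]
      exact Set.add_mem_add hrest h₁

theorem eq_buildingBlocks (h0 : S 0 = 0) (hadd : ∀ k l, S k + S l ⊆ S (k + l))
    (hsplit : ∀ m, 0 < m → ∀ s ∈ S m, Splits (fun k t => t ∈ S k) m s) (m : ℕ) :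
    S m = buildingBlocks S m :=
  (subset_buildingBlocks h0 (hadd 1 1) hsplit m).antisymm (buildingBlocks_subset h0 hadd m)

end BuildingBlocks

theorem zero_mem_SD (n i m : ℕ) : 0 ∈ SD n i m := by
  have hsum (l : List (ℕ × ℕ)) : (l.map (0 : ℕ × ℕ → ℕ)).sum = 0 :=
    List.sum_eq_zero (by simp [eq_comm])
  exact ⟨fun _ _ => rfl, fun l _ => by simp [hsum], fun l l' _ => by simp [hsum]⟩

theorem SD_add_SD_subset (n i k l : ℕ) : SD n i k + SD n i l ⊆ SD n i (k + l) := by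
  rintro _ ⟨s, hs, t, ht, rfl⟩
  have hsum (L : List (ℕ × ℕ)) : (L.map (s + t)).sum = (L.map s).sum + (L.map t).sum :=
    List.sum_map_add
  refine ⟨fun β hβ => ?_, fun L hL => ?_, fun L₁ L₂ hL => ?_⟩
  · exact congrArg₂ (· + ·) (hs.1 β hβ) (ht.1 β hβ)
  · rw [hsum]
    exact add_le_add (hs.2.1 L hL) (ht.2.1 L hL)
  · rw [hsum, add_mul]
    exact add_le_add (hs.2.2 L₁ L₂ hL) (ht.2.2 L₁ L₂ hL)

theorem eq_zero_of_add_eq {ι : Type*} {s s₁ s₂ : ι → ℕ} (h : s₁ + s₂ = s) {β : ι}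
    (hβ : s β = 0) : s₁ β = 0 ∧ s₂ β = 0 := by
  simpa [← h] using hβ

theorem exists_first {P : ℕ → Prop} {x k : ℕ} (hx : x ≤ k) (hk : P k) :
    ∃ l, x ≤ l ∧ l ≤ k ∧ P l ∧ ∀ j, x ≤ j → j < l → ¬ P j := by
  classical
  have h : ∃ l, x ≤ l ∧ P l := ⟨k, hx, hk⟩
  exact ⟨Nat.find h, (Nat.find_spec h).1, Nat.find_min' h ⟨hx, hk⟩, (Nat.find_spec h).2,
    fun j hxj hj hPj => Nat.find_min h hj ⟨hxj, hPj⟩⟩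

theorem exists_last {P : ℕ → Prop} {k y : ℕ} (hy : k ≤ y) (hk : P k) :
    ∃ l, k ≤ l ∧ l ≤ y ∧ P l ∧ ∀ j, l < j → j ≤ y → ¬ P j := by
  classical
  exact ⟨Nat.findGreatest P y, Nat.le_findGreatest hy hk, Nat.findGreatest_le y,
    Nat.findGreatest_spec hy hk, fun j hj hjy => Nat.findGreatest_is_greatest hj hjy⟩

/-- The sum of the first `x` entries of row `p` of `R_3^+`. Here and below columns are counted
from `0`, so that column `k` of row `p` is the root `α_{p,k+3}`; sums are integers so that the sum
over a horizontal segment is a difference. -/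
def rowSum (s : ℕ × ℕ → ℕ) (p x : ℕ) : ℤ := ∑ k ∈ Finset.range x, (s (p, k + 3) : ℤ)

section RowSum

variable {s t : ℕ × ℕ → ℕ} {p x y : ℕ}

theorem rowSum_zero (s : ℕ × ℕ → ℕ) (p : ℕ) : rowSum s p 0 = 0 := rfl

theorem rowSum_succ (s : ℕ × ℕ → ℕ) (p x : ℕ) :
    rowSum s p (x + 1) = rowSum s p x + s (p, x + 3) :=
  Finset.sum_range_succ _ x

theorem rowSum_one (s : ℕ × ℕ → ℕ) (p : ℕ) : rowSum s p 1 = s (p, 3) :=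
  Finset.sum_range_one _

theorem rowSum_add (s t : ℕ × ℕ → ℕ) (p x : ℕ) :
    rowSum (s + t) p x = rowSum s p x + rowSum t p x := by
  simp [rowSum, Finset.sum_add_distrib]

theorem rowSum_mono (s : ℕ × ℕ → ℕ) (p : ℕ) (h : x ≤ y) : rowSum s p x ≤ rowSum s p y :=
  Finset.sum_le_sum_of_subset_of_nonneg (by simpa using h) fun _ _ _ => Int.natCast_nonneg _

theorem rowSum_nonneg (s : ℕ × ℕ → ℕ) (p x : ℕ) : 0 ≤ rowSum s p x :=
  Finset.sum_nonneg fun _ _ => Int.natCast_nonneg _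

theorem rowSum_congr (h : ∀ k < x, s (p, k + 3) = t (p, k + 3)) : rowSum s p x = rowSum t p x :=
  Finset.sum_congr rfl fun k hk => by rw [h k (Finset.mem_range.1 hk)]

theorem rowSum_eq_of_zero (hxy : x ≤ y) (h : ∀ k, x ≤ k → k < y → s (p, k + 3) = 0) :
    rowSum s p x = rowSum s p y := by
  induction y, hxy using Nat.le_induction with
  | base => rfl
  | succ y hy ih =>
    rw [rowSum_succ, ← ih fun k hk hky => h k hk (by omega), h y hy (by omega), Nat.cast_zero,
      add_zero]

theorem exists_pos_of_rowSum_lt (h : rowSum s p x < rowSum s p y) :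
    ∃ k, x ≤ k ∧ k < y ∧ 0 < s (p, k + 3) := by
  by_contra! hzero
  obtain hxy | hyx := le_total x y
  · exact h.ne (rowSum_eq_of_zero hxy fun k hk hky => Nat.le_zero.1 (hzero k hk hky))
  · exact h.not_ge (rowSum_mono s p hyx)

theorem le_rowSum (s : ℕ × ℕ → ℕ) (p : ℕ) {k : ℕ} (h : k < x) : s (p, k + 3) ≤ rowSum s p x :=
  Finset.single_le_sum (f := fun k => (s (p, k + 3) : ℤ)) (fun _ _ => Int.natCast_nonneg _)
    (Finset.mem_range.2 h)

theorem sum_Ico_eq_rowSum_sub (s : ℕ × ℕ → ℕ) (p : ℕ) (h : x ≤ y) :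
    ((∑ k ∈ Finset.Ico x y, s (p, k + 3) : ℕ) : ℤ) = rowSum s p y - rowSum s p x := by
  rw [Nat.cast_sum]
  exact Finset.sum_Ico_eq_sub _ h

end RowSum

/-- The sum over the path that runs through rows `1`, `2`, `3` from column `x` to column `y` and
descends in the columns `u` and `v`. -/
def singleSum (s : ℕ × ℕ → ℕ) (x u v y : ℕ) : ℤ :=
  (rowSum s 1 (u + 1) - rowSum s 1 x) + (rowSum s 2 (v + 1) - rowSum s 2 u) +
    (rowSum s 3 (y + 1) - rowSum s 3 v)

/-- The sum over the type 2 path with `j = 2` whose constituents descend in the columns `u` (from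
row `1` to row `2`) and `v` (from row `2` to row `3`). -/
def doubleSum (L : ℕ) (s : ℕ × ℕ → ℕ) (u v : ℕ) : ℤ :=
  rowSum s 1 (u + 1) + (rowSum s 2 (L + 3) - rowSum s 2 u) + rowSum s 2 (v + 1) +
    (rowSum s 3 (L + 2) - rowSum s 3 v)

theorem singleSum_add (s t : ℕ × ℕ → ℕ) (x u v y : ℕ) :
    singleSum (s + t) x u v y = singleSum s x u v y + singleSum t x u v y := by
  simp only [singleSum, rowSum_add]
  ring

theorem doubleSum_add (L : ℕ) (s t : ℕ × ℕ → ℕ) (u v : ℕ) :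
    doubleSum L (s + t) u v = doubleSum L s u v + doubleSum L t u v := by
  simp only [doubleSum, rowSum_add]
  ring

/-- The type 1 inequalities of `SD n 3 m`, where `L = 2 * n - 7` is the last column of row `3` that
is reached by the paths starting in column `0`. -/
structure SingleBound (L m : ℕ) (s : ℕ × ℕ → ℕ) : Prop where
  lower : ∀ u v, u ≤ v → v ≤ L → singleSum s 0 u v L ≤ m
  upper : ∀ u v, 1 ≤ u → u ≤ v → v ≤ L + 1 → singleSum s 1 u v (L + 1) ≤ m

/-- The inequalities of `SD n 3 m` except for that of the type 2 path with `j = 1`, where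
`L = 2 * n - 7`. -/
structure PathBound (L m : ℕ) (s : ℕ × ℕ → ℕ) : Prop extends SingleBound L m s where
  double : ∀ u v, v < u → u ≤ L + 2 → v ≤ L + 1 → doubleSum L s u v ≤ 2 * m

section Bounds

variable {L m : ℕ} {s t : ℕ × ℕ → ℕ}

theorem SingleBound.congr (hs : SingleBound L m s)
    (h : ∀ p k, k < L + 2 → s (p, k + 3) = t (p, k + 3)) : SingleBound L m t := by
  have hrow (p x : ℕ) (hx : x ≤ L + 2) : rowSum t p x = rowSum s p x :=
    rowSum_congr fun k hk => (h p k (by omega)).symm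
  refine ⟨fun u v huv hv => ?_, fun u v hu huv hv => ?_⟩
  · have := hs.lower u v huv hv
    simp (disch := omega) only [singleSum, hrow] at this ⊢
    exact this
  · have := hs.upper u v hu huv hv
    simp (disch := omega) only [singleSum, hrow] at this ⊢
    exact this

theorem PathBound.congr (hs : PathBound L m s)
    (h : ∀ p k, k < L + 3 → s (p, k + 3) = t (p, k + 3)) : PathBound L m t := by
  have hrow (p x : ℕ) (hx : x ≤ L + 3) : rowSum t p x = rowSum s p x :=
    rowSum_congr fun k hk => (h p k (by omega)).symm
  refine ⟨hs.toSingleBound.congr fun p k hk => h p k (by omega), fun u v hvu hu hv => ?_⟩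
  have := hs.double u v hvu hu hv
  simp (disch := omega) only [doubleSum, hrow] at this ⊢
  exact this

theorem SingleBound.pathBound_of_total_le (hs : SingleBound L m s)
    (h : rowSum s 1 (L + 3) + rowSum s 2 (L + 3) + rowSum s 3 (L + 2) ≤ 2 * m) :
    PathBound L m s := by
  refine ⟨hs, fun u v hvu hu _ => ?_⟩
  have h1 := rowSum_mono s 1 (show u + 1 ≤ L + 3 by omega)
  have h2 := rowSum_mono s 2 (show v + 1 ≤ u by omega)
  have h3 := rowSum_nonneg s 3 v
  rw [doubleSum]
  omega

end Bounds

section Schedule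

variable {L D m r k : ℕ} {s : ℕ × ℕ → ℕ} {σ : ℕ → ℕ → ℕ} {φ ψ : ℕ → ℕ}

/-- The earliest starting times of consecutive jobs of lengths `f 0, f 1, …`, the `k`-th of which
is released at time `r k`. -/
def earliestStart (r f : ℕ → ℕ) : ℕ → ℕ
  | 0 => r 0
  | k + 1 => max (r (k + 1)) (earliestStart r f k + f k)

theorem le_earliestStart (r f : ℕ → ℕ) (k : ℕ) : r k ≤ earliestStart r f k := by
  cases k with
  | zero => rfl
  | succ k => exact le_max_left _ _

theorem earliestStart_add_le (r f : ℕ → ℕ) (k : ℕ) :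
    earliestStart r f k + f k ≤ earliestStart r f (k + 1) :=
  le_max_right _ _

theorem exists_earliestStart_eq (r f : ℕ → ℕ) (v : ℕ) :
    ∃ u ≤ v, earliestStart r f v = r u + ∑ k ∈ Finset.Ico u v, f k := by
  induction v with
  | zero => exact ⟨0, le_rfl, by simp [earliestStart]⟩
  | succ v ih =>
    obtain ⟨u, huv, hu⟩ := ih
    obtain hv | hv := le_total (earliestStart r f v + f v) (r (v + 1))
    · exact ⟨v + 1, le_rfl, by simpa [earliestStart] using hv⟩
    · refine ⟨u, by omega, ?_⟩
      rw [earliestStart, max_eq_right hv, hu, Finset.sum_Ico_succ_top huv, add_assoc]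

/-- `σ p k` is the starting time of a job of length `s (p, k + 3)` that has to be finished before
its right and its lower neighbour may start. -/
structure IsSchedule (s : ℕ × ℕ → ℕ) (σ : ℕ → ℕ → ℕ) : Prop where
  right : ∀ p k, 1 ≤ p → σ p k + s (p, k + 3) ≤ σ p (k + 1)
  down : ∀ p k, 1 ≤ p → σ p k + s (p, k + 3) ≤ σ (p + 1) k

/-- A schedule in which both families of type 1 paths take time at most `m`. -/
structure IsShortSchedule (L m : ℕ) (s : ℕ × ℕ → ℕ) (σ : ℕ → ℕ → ℕ) : Prop
    extends IsSchedule s σ where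
  lower : σ 3 L + s (3, L + 3) ≤ σ 1 0 + m
  upper : σ 3 (L + 1) + s (3, L + 1 + 3) ≤ σ 1 1 + m

/-- The schedule of earliest starting times, except that the first row pauses for time `D` after
its first job. -/
def schedule (D : ℕ) (s : ℕ × ℕ → ℕ) : ℕ → ℕ → ℕ
  | 0 => fun _ => 0
  | 1 => fun k => if k = 0 then 0 else D + ∑ i ∈ Finset.range k, s (1, i + 3)
  | p + 2 => earliestStart (fun k => schedule D s (p + 1) k + s (p + 1, k + 3))
      fun k => s (p + 2, k + 3)

theorem isSchedule_schedule (D : ℕ) (s : ℕ × ℕ → ℕ) : IsSchedule s (schedule D s) where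
  right
    | 1, 0, _ => by simp [schedule]
    | 1, k + 1, _ => by simp [schedule, Finset.sum_range_succ _ (k + 1), add_assoc]
    | _ + 2, k, _ => earliestStart_add_le _ _ k
  down
    | p + 1, k, _ =>
      le_earliestStart (fun k => schedule D s (p + 1) k + s (p + 1, k + 3)) _ k

theorem exists_schedule_end_eq (D : ℕ) (s : ℕ × ℕ → ℕ) (y : ℕ) :
    ∃ u v, u ≤ v ∧ v ≤ y ∧ ((schedule D s 3 y + s (3, y + 3) : ℕ) : ℤ) =
      (if u = 0 then 0 else D) + singleSum s 0 u v y := by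
  obtain ⟨v, hvy, hv⟩ := exists_earliestStart_eq
    (fun k => schedule D s 2 k + s (2, k + 3)) (fun k => s (3, k + 3)) y
  obtain ⟨u, huv, hu⟩ := exists_earliestStart_eq
    (fun k => schedule D s 1 k + s (1, k + 3)) (fun k => s (2, k + 3)) v
  change schedule D s 3 y = schedule D s 2 v + s (2, v + 3) + _ at hv
  change schedule D s 2 v = _ at hu
  have h1 : (schedule D s 1 u : ℤ) = (if u = 0 then 0 else D) + rowSum s 1 u := by
    rw [schedule, rowSum]
    split_ifs with h <;> simp [h]
  refine ⟨u, v, huv, hvy, ?_⟩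
  rw [hv, hu, singleSum, rowSum_succ, rowSum_succ, rowSum_succ, rowSum_zero]
  push_cast only [Nat.cast_add]
  rw [h1, sum_Ico_eq_rowSum_sub s 2 huv, sum_Ico_eq_rowSum_sub s 3 hvy]
  ring

/-- The part of the lengths `s` that is counted when time is rescaled by `φ`. -/
def layer (φ : ℕ → ℕ) (σ : ℕ → ℕ → ℕ) (s : ℕ × ℕ → ℕ) (β : ℕ × ℕ) : ℕ :=
  φ (σ β.1 (β.2 - 3) + s β) - φ (σ β.1 (β.2 - 3))

theorem layer_add_layer (hφ : Monotone φ) (hψ : Monotone ψ) (h : ∀ x, φ x + ψ x = x)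
    (σ : ℕ → ℕ → ℕ) (s : ℕ × ℕ → ℕ) : layer φ σ s + layer ψ σ s = s := by
  funext β
  have hφβ := hφ (Nat.le_add_right (σ β.1 (β.2 - 3)) (s β))
  have hψβ := hψ (Nat.le_add_right (σ β.1 (β.2 - 3)) (s β))
  have hstart := h (σ β.1 (β.2 - 3))
  have hend := h (σ β.1 (β.2 - 3) + s β)
  change layer φ σ s β + layer ψ σ s β = s β
  simp only [layer]
  omega

theorem rowSum_layer_le (hσ : IsSchedule s σ) (hφ : Monotone φ) {p x y : ℕ} (hp : 1 ≤ p)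
    (hxy : x ≤ y) :
    rowSum (layer φ σ s) p (y + 1) - rowSum (layer φ σ s) p x ≤
      φ (σ p y + s (p, y + 3)) - φ (σ p x) := by
  have hlayer (k : ℕ) :
      (layer φ σ s (p, k + 3) : ℤ) = φ (σ p k + s (p, k + 3)) - φ (σ p k) :=
    Nat.cast_sub (hφ (Nat.le_add_right _ _))
  induction y, hxy using Nat.le_induction with
  | base => rw [rowSum_succ, hlayer, add_sub_cancel_left]
  | succ y _ ih =>
    rw [rowSum_succ, hlayer]
    have := hφ (hσ.right p y hp)
    omega

theorem singleSum_layer_le (hσ : IsSchedule s σ) (hφ : Monotone φ) {x u v y : ℕ} (hxu : x ≤ u)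
    (huv : u ≤ v) (hvy : v ≤ y) :
    singleSum (layer φ σ s) x u v y ≤ φ (σ 3 y + s (3, y + 3)) - φ (σ 1 x) := by
  have h1 := rowSum_layer_le hσ hφ (p := 1) le_rfl hxu
  have h2 := rowSum_layer_le hσ hφ (p := 2) (by omega) huv
  have h3 := rowSum_layer_le hσ hφ (p := 3) (by omega) hvy
  have hu : φ (σ 1 u + s (1, u + 3)) ≤ φ (σ 2 u) := hφ (hσ.down 1 u le_rfl)
  have hv : φ (σ 2 v + s (2, v + 3)) ≤ φ (σ 3 v) := hφ (hσ.down 2 v (by omega))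
  rw [singleSum]
  omega

theorem singleBound_layer (hσ : IsShortSchedule L m s σ) (hφ : Monotone φ)
    (hper : ∀ x, φ (x + m) = φ x + r) : SingleBound L r (layer φ σ s) where
  lower u v huv hv := by
    have hsum := singleSum_layer_le hσ.toIsSchedule hφ (Nat.zero_le u) huv hv
    have hend := (hφ hσ.lower).trans_eq (hper _)
    omega
  upper u v hu huv hv := by
    have hsum := singleSum_layer_le hσ.toIsSchedule hφ hu huv hv
    have hend := (hφ hσ.upper).trans_eq (hper _)
    omega

theorem SingleBound.exchange (hs : SingleBound L m s) {u v w : ℕ} (hu : 1 ≤ u) (huv : u ≤ v)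
    (hv : v ≤ L) (hw : w ≤ L + 1) :
    singleSum s 0 0 w (L + 1) + singleSum s 0 u v L ≤ 2 * m + s (1, 3) := by
  have h1 := rowSum_one s 1
  obtain hwv | hvw := le_total w v
  · have hlower := hs.lower 0 w (Nat.zero_le w) (by omega)
    have hupper := hs.upper u v hu huv (by omega)
    simp only [singleSum, rowSum_zero, Nat.zero_add] at *
    omega
  · have hlower := hs.lower 0 v (Nat.zero_le v) hv
    have hupper := hs.upper u w hu (by omega) hw
    simp only [singleSum, rowSum_zero, Nat.zero_add] at *
    omega

theorem SingleBound.exists_delay (hs : SingleBound L m s) :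
    ∃ D : ℕ, (∀ v ≤ L + 1, singleSum s 0 0 v (L + 1) ≤ D + s (1, 3) + m) ∧
      ∀ u v, 1 ≤ u → u ≤ v → v ≤ L → D + singleSum s 0 u v L ≤ m := by
  obtain ⟨w, hw, hmax⟩ := (Finset.range (L + 2)).exists_max_image
    (fun w => singleSum s 0 0 w (L + 1)) ⟨0, by simp⟩
  rw [Finset.mem_range] at hw
  refine ⟨(singleSum s 0 0 w (L + 1) - s (1, 3) - m).toNat, fun v hv => ?_,
    fun u v hu huv hv => ?_⟩
  · have := hmax v (by rw [Finset.mem_range]; omega)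
    omega
  · have hexchange := hs.exchange hu huv hv (by omega : w ≤ L + 1)
    have hlower := hs.lower u v huv hv
    omega

theorem SingleBound.isShortSchedule (hs : SingleBound L m s)
    (h0 : ∀ v ≤ L + 1, singleSum s 0 0 v (L + 1) ≤ D + s (1, 3) + m)
    (hD : ∀ u v, 1 ≤ u → u ≤ v → v ≤ L → D + singleSum s 0 u v L ≤ m) :
    IsShortSchedule L m s (schedule D s) := by
  refine ⟨isSchedule_schedule D s, ?_, ?_⟩
  · obtain ⟨u, v, huv, hv, hend⟩ := exists_schedule_end_eq D s L
    have hstart : schedule D s 1 0 = 0 := rfl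
    obtain rfl | hu := Nat.eq_zero_or_pos u
    · have := hs.lower 0 v huv hv
      simp only [if_true] at hend
      omega
    · have := hD u v hu huv hv
      rw [if_neg (by omega)] at hend
      omega
  · obtain ⟨u, v, huv, hv, hend⟩ := exists_schedule_end_eq D s (L + 1)
    have hstart : schedule D s 1 1 = D + s (1, 3) := by simp [schedule]
    obtain rfl | hu := Nat.eq_zero_or_pos u
    · have := h0 v hv
      simp only [if_true] at hend
      omega
    · have hupper := hs.upper u v hu huv hv
      have hfirst := rowSum_one s 1
      rw [if_neg (by omega)] at hend
      simp only [singleSum, rowSum_zero, Nat.zero_add] at *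
      omega

theorem SingleBound.exists_add (hs : SingleBound L (r + k) s) (h : 0 < r + k) :
    ∃ s₁ s₂, s₁ + s₂ = s ∧ SingleBound L r s₁ ∧ SingleBound L k s₂ := by
  obtain ⟨D, h0, hD⟩ := hs.exists_delay
  have hσ := hs.isShortSchedule h0 hD
  let φ (x : ℕ) : ℕ := r * x / (r + k)
  let ψ (x : ℕ) : ℕ := x - φ x
  have hφ_le (x : ℕ) : φ x ≤ x :=
    Nat.div_le_of_le_mul (Nat.mul_le_mul_right x (Nat.le_add_right r k))
  have hφ : Monotone φ := fun x y hxy => Nat.div_le_div_right (Nat.mul_le_mul_left r hxy)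
  have hφ_succ (x : ℕ) : φ (x + 1) ≤ φ x + 1 := by
    rw [← Nat.add_div_right _ h]
    exact Nat.div_le_div_right (by rw [mul_add, mul_one]; omega)
  have hψ : Monotone ψ := monotone_nat_of_le_succ fun x => by
    have := hφ_succ x
    have := hφ_le x
    simp only [ψ]
    omega
  have hφ_per (x : ℕ) : φ (x + (r + k)) = φ x + r := by
    simp only [φ]
    rw [mul_add, Nat.add_mul_div_right _ _ h]
  have hψ_per (x : ℕ) : ψ (x + (r + k)) = ψ x + k := by
    have := hφ_per x
    have := hφ_le x
    simp only [ψ]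
    omega
  exact ⟨layer φ _ s, layer ψ _ s,
    layer_add_layer hφ hψ (fun x => Nat.add_sub_cancel' (hφ_le x)) _ s,
    singleBound_layer hσ hφ hφ_per, singleBound_layer hσ hψ hψ_per⟩

end Schedule

section Cut

variable {L m r k U V : ℕ} {s t : ℕ × ℕ → ℕ}

theorem exists_redistribute {ι : Type*} (s₁ s₂ : ι → ℕ) (β : ι) {x₁ x₂ N₁ N₂ : ℤ} (h₁ : x₁ ≤ N₁)
    (h₂ : x₂ ≤ N₂) (h : x₁ + x₂ + (s₁ β + s₂ β) ≤ N₁ + N₂) :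
    ∃ t₁ t₂ : ι → ℕ, t₁ + t₂ = s₁ + s₂ ∧ (∀ γ ≠ β, t₁ γ = s₁ γ) ∧ (∀ γ ≠ β, t₂ γ = s₂ γ) ∧
      x₁ + t₁ β ≤ N₁ ∧ x₂ + t₂ β ≤ N₂ := by
  classical
  obtain ⟨e, f, hef, he, hf⟩ : ∃ e f : ℕ, e + f = s₁ β + s₂ β ∧ x₁ + e ≤ N₁ ∧ x₂ + f ≤ N₂ :=
    ⟨min (s₁ β + s₂ β) (N₁ - x₁).toNat, s₁ β + s₂ β - min (s₁ β + s₂ β) (N₁ - x₁).toNat,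
      by omega, by omega, by omega⟩
  refine ⟨Function.update s₁ β e, Function.update s₂ β f, funext fun γ => ?_,
    fun γ hγ => Function.update_of_ne hγ _ _, fun γ hγ => Function.update_of_ne hγ _ _,
    by simpa using he, by simpa using hf⟩
  obtain rfl | hγ := eq_or_ne γ β
  · simpa using hef
  · simp [hγ]

/-- The sum of all entries that lie on the type 1 paths. -/
def innerTotal (L : ℕ) (s : ℕ × ℕ → ℕ) : ℤ :=
  rowSum s 1 (L + 2) + rowSum s 2 (L + 2) + rowSum s 3 (L + 2)

theorem innerTotal_congr (h : ∀ p k, k < L + 2 → s (p, k + 3) = t (p, k + 3)) :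
    innerTotal L s = innerTotal L t := by
  rw [innerTotal, innerTotal, rowSum_congr (h 1), rowSum_congr (h 2), rowSum_congr (h 3)]

theorem SingleBound.exists_pathBound_add {s₁ s₂ : ℕ × ℕ → ℕ} (h₁ : SingleBound L r s₁)
    (h₂ : SingleBound L k s₂) (ht₁ : innerTotal L s₁ ≤ 2 * r) (ht₂ : innerTotal L s₂ ≤ 2 * k)
    (h : innerTotal L (s₁ + s₂) + ((s₁ + s₂) (1, L + 5) + (s₁ + s₂) (2, L + 5) : ℕ) ≤
      2 * (r + k)) :
    ∃ t₁ t₂, t₁ + t₂ = s₁ + s₂ ∧ PathBound L r t₁ ∧ PathBound L k t₂ := by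
  have hadd : innerTotal L (s₁ + s₂) = innerTotal L s₁ + innerTotal L s₂ := by
    simp only [innerTotal, rowSum_add]
    ring
  rw [hadd] at h
  simp only [Pi.add_apply] at h
  obtain ⟨t₁, t₂, hst, htoff₁, htoff₂, hle₁, hle₂⟩ :=
    exists_redistribute s₁ s₂ (1, L + 5) ht₁ ht₂ (by omega)
  have ht2₁ := htoff₁ (2, L + 5) (by simp)
  have ht2₂ := htoff₂ (2, L + 5) (by simp)
  have hsum : t₁ (1, L + 5) + t₂ (1, L + 5) = s₁ (1, L + 5) + s₂ (1, L + 5) :=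
    congrFun hst (1, L + 5)
  obtain ⟨u₁, u₂, hut, huoff₁, huoff₂, hle₁, hle₂⟩ :=
    exists_redistribute t₁ t₂ (2, L + 5) hle₁ hle₂ (by omega)
  have hpath {l : ℕ} {s t u : ℕ × ℕ → ℕ} (hs : SingleBound L l s)
      (htoff : ∀ γ ≠ (1, L + 5), t γ = s γ) (huoff : ∀ γ ≠ (2, L + 5), u γ = t γ)
      (hle : innerTotal L s + t (1, L + 5) + u (2, L + 5) ≤ 2 * l) : PathBound L l u := by
    have hagree (p k : ℕ) (hk : k < L + 2) : s (p, k + 3) = u (p, k + 3) := by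
      rw [huoff _ (by simp; omega), htoff _ (by simp; omega)]
    refine (hs.congr hagree).pathBound_of_total_le ?_
    rw [innerTotal_congr hagree, innerTotal, ← huoff (1, L + 5) (by simp)] at hle
    rw [rowSum_succ u 1 (L + 2), rowSum_succ u 2 (L + 2)]
    exact (by ring : _ = _).trans_le hle
  exact ⟨u₁, u₂, hut.trans hst, hpath h₁ htoff₁ huoff₁ hle₁, hpath h₂ htoff₂ huoff₂ hle₂⟩

/-- The type 2 path descending in the columns `U` and `V` contains all of the support. -/
structure IsCut (L U V : ℕ) (s : ℕ × ℕ → ℕ) : Prop where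
  lt : V < U
  le : U ≤ L + 2
  le' : V ≤ L + 1
  row_three : ∀ k < V, s (3, k + 3) = 0
  row_two : ∀ k, V < k → k < U → s (2, k + 3) = 0
  row_one : ∀ k, U < k → k ≤ L + 2 → s (1, k + 3) = 0

theorem IsCut.rowSum_one_eq (h : IsCut L U V s) : rowSum s 1 (U + 1) = rowSum s 1 (L + 3) :=
  rowSum_eq_of_zero (Nat.succ_le_succ h.le) fun k hk hkL => h.row_one k hk (Nat.le_of_lt_succ hkL)

theorem IsCut.rowSum_two_eq (h : IsCut L U V s) : rowSum s 2 (V + 1) = rowSum s 2 U :=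
  rowSum_eq_of_zero h.lt fun k hk hkU => h.row_two k hk hkU

theorem IsCut.rowSum_three_eq_zero (h : IsCut L U V s) : rowSum s 3 V = 0 :=
  (rowSum_eq_of_zero (Nat.zero_le V) fun k _ hk => h.row_three k hk).symm

theorem IsCut.doubleSum_eq (h : IsCut L U V s) :
    doubleSum L s U V = innerTotal L s + (s (1, L + 5) + s (2, L + 5) : ℕ) := by
  rw [doubleSum, innerTotal, h.rowSum_one_eq, h.rowSum_two_eq, h.rowSum_three_eq_zero,
    rowSum_succ s 1 (L + 2), rowSum_succ s 2 (L + 2)]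
  push_cast
  ring

theorem IsCut.mono (h : IsCut L U V s) (hts : ∀ β, s β = 0 → t β = 0) : IsCut L U V t where
  lt := h.lt
  le := h.le
  le' := h.le'
  row_three k hk := hts _ (h.row_three k hk)
  row_two k hk hkU := hts _ (h.row_two k hk hkU)
  row_one k hk hkL := hts _ (h.row_one k hk hkL)

theorem IsCut.innerTotal_le (h : IsCut L U V s) (hs : SingleBound L m s) :
    innerTotal L s ≤ 2 * m := by
  have hVU := h.lt
  have hU := h.le
  have h1 := (rowSum_mono s 1 (show L + 2 ≤ L + 3 by omega)).trans_eq h.rowSum_one_eq.symm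
  have h2 := h.rowSum_two_eq
  have h3 := h.rowSum_three_eq_zero
  have hcorner := hs.upper (L + 1) (L + 1) (by omega) le_rfl le_rfl
  obtain hVL | hVL := Nat.lt_or_ge L V
  · obtain rfl : V = L + 1 := h.le'.antisymm hVL
    have hlower := hs.lower 0 L (by omega) le_rfl
    obtain rfl : U = L + 2 := by omega
    have h3' := rowSum_mono s 3 (show L ≤ L + 1 by omega)
    simp only [singleSum, innerTotal, rowSum_zero, add_assoc, Nat.reduceAdd] at *
    omega
  have hlower := hs.lower 0 V (by omega) hVL
  obtain hUL | hUL := Nat.lt_or_ge U (L + 2)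
  · have hupper := hs.upper U (L + 1) (by omega) (by omega) le_rfl
    simp only [singleSum, innerTotal, rowSum_zero, add_assoc, Nat.reduceAdd] at *
    omega
  · obtain rfl : U = L + 2 := hU.antisymm hUL
    have h2' := rowSum_mono s 2 (show L + 1 ≤ L + 2 by omega)
    simp only [singleSum, innerTotal, rowSum_zero, add_assoc, Nat.reduceAdd] at *
    omega

theorem exists_isCut
    (h : ∀ v w u, v < w → w < u → u ≤ L + 2 → 0 < s (3, v + 3) → 0 < s (2, w + 3) →
      s (1, u + 3) = 0) :
    ∃ U V, IsCut L U V s := by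
  by_cases hc : ∃ v ≤ L, 0 < s (3, v + 3)
  · obtain ⟨v, hv, hcv⟩ := hc
    obtain ⟨V, -, hVv, hcV, hV⟩ := exists_first (P := fun k => 0 < s (3, k + 3)) (Nat.zero_le v) hcv
    have hV' (k : ℕ) (hk : k < V) : s (3, k + 3) = 0 := Nat.eq_zero_of_not_pos (hV k (by omega) hk)
    by_cases ha : ∃ u, V + 2 ≤ u ∧ u ≤ L + 2 ∧ 0 < s (1, u + 3)
    · obtain ⟨u, hVu, hu, hau⟩ := ha
      obtain ⟨U, huU, hU, haU, hmax⟩ := exists_last (P := fun k => 0 < s (1, k + 3)) hu hau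
      refine ⟨U, V, by omega, hU, by omega, hV', fun w hVw hwU => ?_,
        fun k hk hkL => Nat.eq_zero_of_not_pos (hmax k hk hkL)⟩
      by_contra hbw
      exact haU.ne' (h V w U hVw hwU hU hcV (by omega))
    · push Not at ha
      exact ⟨V + 1, V, by omega, by omega, by omega, hV', fun k _ _ => by omega,
        fun k hk hkL => Nat.le_zero.1 (ha k hk hkL)⟩
  · push Not at hc
    exact ⟨L + 2, L + 1, by omega, le_rfl, le_rfl,
      fun k hk => Nat.le_zero.1 (hc k (by omega)), fun k _ _ => by omega, fun k _ _ => by omega⟩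

theorem PathBound.splits_of_isCut (hs : PathBound L m s) (hm : 0 < m) (h : IsCut L U V s) :
    Splits (PathBound L) m s := by
  obtain ⟨k, rfl⟩ := Nat.exists_eq_add_of_le hm
  obtain ⟨s₁, s₂, rfl, h₁, h₂⟩ := hs.toSingleBound.exists_add hm
  have hc₁ : IsCut L U V s₁ := h.mono fun β hβ => (eq_zero_of_add_eq rfl hβ).1
  have hc₂ : IsCut L U V s₂ := h.mono fun β hβ => (eq_zero_of_add_eq rfl hβ).2
  have htotal := hs.double U V h.lt h.le h.le'
  rw [h.doubleSum_eq] at htotal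
  obtain ⟨t₁, t₂, hst, ht₁, ht₂⟩ := h₁.exists_pathBound_add h₂ (hc₁.innerTotal_le h₁)
    (hc₂.innerTotal_le h₂) (by exact_mod_cast htotal)
  exact ⟨1, k, t₁, t₂, Or.inl rfl, rfl, hst, ht₁, ht₂⟩

end Cut

section Units

variable {L u v x y k p : ℕ} {s t : ℕ × ℕ → ℕ}

/-- The indicator function of the root in row `p` and column `k`. -/
def unitAt (p k : ℕ) : ℕ × ℕ → ℕ := Pi.single (p, k + 3) 1

theorem unitAt_apply (p k q l : ℕ) : unitAt p k (q, l + 3) = if q = p ∧ l = k then 1 else 0 := by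
  simp [unitAt, Pi.single_apply]

theorem unitAt_add_le (ht : t ≤ s) (h : t (p, k + 3) < s (p, k + 3)) : unitAt p k + t ≤ s := by
  intro β
  obtain rfl | hβ := eq_or_ne β (p, k + 3)
  · simpa [unitAt, add_comm 1] using h
  · simpa [unitAt, hβ] using ht β

theorem unitAt_le (h : 0 < s (p, k + 3)) : unitAt p k ≤ s := by
  simpa using unitAt_add_le (t := 0) (fun _ => Nat.zero_le _) h

theorem rowSum_unitAt_self (p k x : ℕ) : rowSum (unitAt p k) p x = if k < x then 1 else 0 := by
  simp [rowSum, unitAt_apply]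

theorem rowSum_unitAt_of_ne {q : ℕ} (h : q ≠ p) (k x : ℕ) : rowSum (unitAt p k) q x = 0 := by
  simp [rowSum, unitAt_apply, h]

theorem singleSum_unitAt_one (hxu : x ≤ u) (v y k : ℕ) :
    singleSum (unitAt 1 k) x u v y = if x ≤ k ∧ k ≤ u then 1 else 0 := by
  simp (disch := decide) only [singleSum, rowSum_unitAt_self, rowSum_unitAt_of_ne]
  split_ifs <;> omega

theorem singleSum_unitAt_two (huv : u ≤ v) (x y k : ℕ) :
    singleSum (unitAt 2 k) x u v y = if u ≤ k ∧ k ≤ v then 1 else 0 := by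
  simp (disch := decide) only [singleSum, rowSum_unitAt_self, rowSum_unitAt_of_ne]
  split_ifs <;> omega

theorem singleSum_unitAt_three (hvy : v ≤ y) (x u k : ℕ) :
    singleSum (unitAt 3 k) x u v y = if v ≤ k ∧ k ≤ y then 1 else 0 := by
  simp (disch := decide) only [singleSum, rowSum_unitAt_self, rowSum_unitAt_of_ne]
  split_ifs <;> omega

theorem doubleSum_unitAt_one (L u v k : ℕ) :
    doubleSum L (unitAt 1 k) u v = if k ≤ u then 1 else 0 := by
  simp (disch := decide) only [doubleSum, rowSum_unitAt_self, rowSum_unitAt_of_ne]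
  split_ifs <;> omega

theorem doubleSum_unitAt_two (hk : k ≤ L + 2) (u v : ℕ) :
    doubleSum L (unitAt 2 k) u v = (if u ≤ k then 1 else 0) + if k ≤ v then 1 else 0 := by
  simp (disch := decide) only [doubleSum, rowSum_unitAt_self, rowSum_unitAt_of_ne]
  split_ifs <;> omega

theorem doubleSum_unitAt_three (hk : k ≤ L + 1) (u v : ℕ) :
    doubleSum L (unitAt 3 k) u v = if v ≤ k then 1 else 0 := by
  simp (disch := decide) only [doubleSum, rowSum_unitAt_self, rowSum_unitAt_of_ne]
  split_ifs <;> omega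

end Units

section Summand

variable {L m r : ℕ} {s t : ℕ × ℕ → ℕ}

/-- `t ≤ s` has level `r`, and `s - t` has level `m - r`. -/
structure IsSummand (L m r : ℕ) (t s : ℕ × ℕ → ℕ) : Prop where
  le : t ≤ s
  pathBound : PathBound L r t
  lower : ∀ u v, u ≤ v → v ≤ L → singleSum s 0 u v L + r ≤ m + singleSum t 0 u v L
  upper : ∀ u v, 1 ≤ u → u ≤ v → v ≤ L + 1 →
    singleSum s 1 u v (L + 1) + r ≤ m + singleSum t 1 u v (L + 1)
  double : ∀ u v, v < u → u ≤ L + 2 → v ≤ L + 1 →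
    doubleSum L s u v + 2 * r ≤ 2 * m + doubleSum L t u v

theorem singleSum_nonneg (s : ℕ × ℕ → ℕ) {x u v y : ℕ} (hxu : x ≤ u) (huv : u ≤ v)
    (hvy : v ≤ y) : 0 ≤ singleSum s x u v y := by
  have h1 := rowSum_mono s 1 (show x ≤ u + 1 by omega)
  have h2 := rowSum_mono s 2 (show u ≤ v + 1 by omega)
  have h3 := rowSum_mono s 3 (show v ≤ y + 1 by omega)
  rw [singleSum]
  omega

theorem IsSummand.splits (h : IsSummand L m r t s) (hr : r = 1 ∨ r = 2) :
    Splits (PathBound L) m s := by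
  obtain ⟨s, rfl⟩ := exists_add_of_le h.le
  have hlower (u v : ℕ) (huv : u ≤ v) (hv : v ≤ L) : singleSum s 0 u v L + r ≤ m := by
    have := h.lower u v huv hv
    rw [singleSum_add] at this
    omega
  have hrm : r ≤ m := by
    have := hlower 0 0 le_rfl (Nat.zero_le L)
    have := singleSum_nonneg s le_rfl le_rfl (Nat.zero_le L)
    omega
  refine ⟨r, m - r, t, s, hr, by omega, rfl, h.pathBound,
    ⟨fun u v huv hv => ?_, fun u v hu huv hv => ?_⟩, fun u v hvu hu hv => ?_⟩
  · have := hlower u v huv hv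
    omega
  · have := h.upper u v hu huv hv
    rw [singleSum_add] at this
    omega
  · have := h.double u v hvu hu hv
    rw [doubleSum_add] at this
    omega

theorem PathBound.isSummand_corners (hs : PathBound L m s) (ha : 0 < s (1, 3))
    (hc : 0 < s (3, L + 4)) : IsSummand L m 1 (unitAt 1 0 + unitAt 3 (L + 1)) s where
  le := unitAt_add_le (unitAt_le hc) (by simpa [unitAt_apply] using ha)
  pathBound := by
    refine ⟨⟨fun u v _ _ => ?_, fun u v _ _ _ => ?_⟩, fun u v _ _ _ => ?_⟩ <;>
      simp (disch := omega) only [singleSum_add, doubleSum_add, singleSum_unitAt_one,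
        singleSum_unitAt_three, doubleSum_unitAt_one, doubleSum_unitAt_three] <;>
      split_ifs <;> omega
  lower u v huv hv := by
    have := hs.lower u v huv hv
    simp (disch := omega) only [singleSum_add, singleSum_unitAt_one, singleSum_unitAt_three]
    split_ifs <;> omega
  upper u v hu huv hv := by
    have := hs.upper u v hu huv hv
    simp (disch := omega) only [singleSum_add, singleSum_unitAt_one, singleSum_unitAt_three]
    split_ifs <;> omega
  double u v hvu hu hv := by
    have := hs.double u v hvu hu hv
    simp (disch := omega) only [doubleSum_add, doubleSum_unitAt_one, doubleSum_unitAt_three]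
    split_ifs <;> omega

end Summand

section Triple

variable {L m u v w x : ℕ} {s : ℕ × ℕ → ℕ}

/-- Positive entries in the columns `v < w < u` of the rows `3`, `2`, `1` that are as close to each
other as possible. -/
structure IsMinimalTriple (s : ℕ × ℕ → ℕ) (u v w : ℕ) : Prop where
  lt : v < w
  lt' : w < u
  row_one_pos : 0 < s (1, u + 3)
  row_two_pos : 0 < s (2, w + 3)
  row_three_pos : 0 < s (3, v + 3)
  row_one : ∀ k, w < k → k < u → s (1, k + 3) = 0
  row_two : ∀ k, v < k → k < w → s (2, k + 3) = 0
  row_three : ∀ k, v < k → k < w → s (3, k + 3) = 0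

theorem exists_isMinimalTriple (hvw : v < w) (hwu : w < u) (ha : 0 < s (1, u + 3))
    (hb : 0 < s (2, w + 3)) (hc : 0 < s (3, v + 3)) :
    ∃ u' v' w', u' ≤ u ∧ w' ≤ w ∧ IsMinimalTriple s u' v' w' := by
  obtain ⟨w', hvw', hw'w, hbw', hb0⟩ := exists_first (P := fun k => 0 < s (2, k + 3)) hvw hb
  obtain ⟨v', hvv', hv'w', hcv', hc0⟩ :=
    exists_last (P := fun k => 0 < s (3, k + 3)) (Nat.le_sub_one_of_lt hvw') hc
  obtain ⟨u', hwu', hu'u, hau', ha0⟩ :=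
    exists_first (P := fun k => 0 < s (1, k + 3)) (show w' + 1 ≤ u by omega) ha
  refine ⟨u', v', w', hu'u, hw'w, by omega, by omega, hau', hbw', hcv',
    fun k hk hku => ?_, fun k hk hkw => ?_, fun k hk hkw => ?_⟩ <;> rw [← Nat.le_zero, ← not_lt]
  · exact ha0 k hk hku
  · exact hb0 k (by omega) hkw
  · exact hc0 k hk (by omega)

namespace IsMinimalTriple

theorem rowSum_one_eq (h : IsMinimalTriple s u v w) (hwx : w < x) (hxu : x ≤ u) :
    rowSum s 1 x = rowSum s 1 (w + 1) :=
  (rowSum_eq_of_zero hwx fun k hk hkx => h.row_one k hk (by omega)).symm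

theorem rowSum_two_eq (h : IsMinimalTriple s u v w) (hvx : v < x) (hxw : x ≤ w) :
    rowSum s 2 x = rowSum s 2 (v + 1) :=
  (rowSum_eq_of_zero hvx fun k hk hkx => h.row_two k hk (by omega)).symm

theorem rowSum_three_eq (h : IsMinimalTriple s u v w) (hvx : v < x) (hxw : x ≤ w) :
    rowSum s 3 x = rowSum s 3 (v + 1) :=
  (rowSum_eq_of_zero hvx fun k hk hkx => h.row_three k hk (by omega)).symm

theorem pathBound (h : IsMinimalTriple s u v w) (hu : u ≤ L + 2) :
    PathBound L 1 (unitAt 1 u + (unitAt 2 w + unitAt 3 v)) := by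
  have := h.lt
  have := h.lt'
  refine ⟨⟨fun U V _ _ => ?_, fun U V _ _ _ => ?_⟩, fun U V _ _ _ => ?_⟩ <;>
    simp (disch := omega) only [singleSum_add, doubleSum_add, singleSum_unitAt_one,
      singleSum_unitAt_two, singleSum_unitAt_three, doubleSum_unitAt_one, doubleSum_unitAt_two,
      doubleSum_unitAt_three] <;>
    split_ifs <;> omega

theorem singleSum_lt_of_lt_of_lt (h : IsMinimalTriple s u v w) {U : ℕ} (hwU : w < U) (hUu : U < u)
    (x V y : ℕ) : singleSum s x U V y < singleSum s x w V y := by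
  have h1 := h.rowSum_one_eq (x := U + 1) (by omega) (by omega)
  have h2 := rowSum_mono s 2 (show w + 1 ≤ U by omega)
  have h2' := rowSum_succ s 2 w
  have hw := h.row_two_pos
  simp only [singleSum]
  omega

theorem singleSum_lt_left (h : IsMinimalTriple s u v w) {V : ℕ} (hvV : v < V) (hVw : V < w)
    (x U y : ℕ) : singleSum s x U V y < singleSum s x U v y := by
  have h2 := h.rowSum_two_eq (x := V + 1) (by omega) (by omega)
  have h3 := h.rowSum_three_eq (x := V) hvV hVw.le
  have h3' := rowSum_succ s 3 v
  have hv := h.row_three_pos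
  simp only [singleSum]
  omega

theorem singleSum_lt_right (h : IsMinimalTriple s u v w) {V : ℕ} (hvV : v < V) (hVw : V < w)
    (x U y : ℕ) : singleSum s x U V y < singleSum s x U w y := by
  have h2 := h.rowSum_two_eq (x := V + 1) (by omega) (by omega)
  have h2w := h.rowSum_two_eq (x := w) h.lt le_rfl
  have h2' := rowSum_succ s 2 w
  have h3 := h.rowSum_three_eq (x := V) hvV hVw.le
  have h3w := h.rowSum_three_eq (x := w) h.lt le_rfl
  have hw := h.row_two_pos
  simp only [singleSum]
  omega

theorem singleSum_le_rowSum (h : IsMinimalTriple s u v w) {U V y : ℕ} (hvU : v < U) (hUV : U ≤ V)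
    (hVy : V ≤ y) (hyw : y < w) : singleSum s 0 U V y ≤ rowSum s 1 w := by
  have h1 := rowSum_mono s 1 (show U + 1 ≤ w by omega)
  have h2 := h.rowSum_two_eq (x := U) hvU (by omega)
  have h2' := h.rowSum_two_eq (x := V + 1) (by omega) (by omega)
  have h3 := h.rowSum_three_eq (x := V) (by omega) (by omega)
  have h3' := h.rowSum_three_eq (x := y + 1) (by omega) hyw
  simp only [singleSum, rowSum_zero]
  omega

theorem doubleSum_lt_of_lt_of_lt (h : IsMinimalTriple s u v w) {U : ℕ} (hwU : w < U) (hUu : U < u)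
    (L V : ℕ) : doubleSum L s U V < doubleSum L s w V := by
  have h1 := h.rowSum_one_eq (x := U + 1) (by omega) (by omega)
  have h2 := rowSum_mono s 2 (show w + 1 ≤ U by omega)
  have h2' := rowSum_succ s 2 w
  have hw := h.row_two_pos
  simp only [doubleSum]
  omega

theorem doubleSum_lt_left (h : IsMinimalTriple s u v w) {V : ℕ} (hvV : v < V) (hVw : V < w)
    (L U : ℕ) : doubleSum L s U V < doubleSum L s U v := by
  have h2 := h.rowSum_two_eq (x := V + 1) (by omega) (by omega)
  have h3 := h.rowSum_three_eq (x := V) hvV hVw.le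
  have h3' := rowSum_succ s 3 v
  have hv := h.row_three_pos
  simp only [doubleSum]
  omega

theorem doubleSum_lt_of_le (h : IsMinimalTriple s u v w) {U V : ℕ} (hwV : w ≤ V) (hVU : V < U)
    (hUu : U < u) (L : ℕ) : doubleSum L s U V < doubleSum L s w v := by
  have hvw := h.lt
  have h1 := h.rowSum_one_eq (x := U + 1) (by omega) (by omega)
  have h2 := rowSum_mono s 2 (show V + 1 ≤ U by omega)
  have h2' := h.rowSum_two_eq (x := w) hvw le_rfl
  have h3 := rowSum_mono s 3 (show v + 1 ≤ V by omega)
  have h3' := rowSum_succ s 3 v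
  have hv := h.row_three_pos
  simp only [doubleSum]
  omega

theorem lower_lt (h : IsMinimalTriple s u v w) (hs : SingleBound L m s)
    (hw : w ≤ L ∨ w = L + 1 ∧ rowSum s 1 (L + 1) < m) {U V : ℕ} (hUV : U ≤ V) (hV : V ≤ L)
    (hUu : U < u) (hUwV : w < U ∨ V < w) (hvV : v < V) : singleSum s 0 U V L < m := by
  obtain hwU | hVw := hUwV
  · exact (h.singleSum_lt_of_lt_of_lt hwU hUu 0 V L).trans_le (hs.lower w V (by omega) hV)
  obtain hUv | hvU := le_or_gt U v
  · exact (h.singleSum_lt_left hvV hVw 0 U L).trans_le (hs.lower U v hUv (by omega))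
  obtain hwL | ⟨rfl, hm⟩ := hw
  · exact (h.singleSum_lt_right hvV hVw 0 U L).trans_le (hs.lower U w (by omega) hwL)
  · exact (h.singleSum_le_rowSum hvU hUV hV (Nat.lt_succ_self L)).trans_lt hm

theorem upper_lt (h : IsMinimalTriple s u v w) (hs : SingleBound L m s) (hw : w ≤ L + 1) {U V : ℕ}
    (hU : 1 ≤ U) (hUV : U ≤ V) (hV : V ≤ L + 1) (hUu : U < u) (hUwV : w < U ∨ V < w) (hvV : v < V) :
    singleSum s 1 U V (L + 1) < m := by
  obtain hwU | hVw := hUwV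
  · exact (h.singleSum_lt_of_lt_of_lt hwU hUu 1 V _).trans_le
      (hs.upper w V (Nat.one_le_of_lt h.lt) (by omega) hV)
  obtain hUv | _ := le_or_gt U v
  · exact (h.singleSum_lt_left hvV hVw 1 U _).trans_le
      (hs.upper U v hU hUv (by omega))
  · exact (h.singleSum_lt_right hvV hVw 1 U _).trans_le (hs.upper U w hU (by omega) hw)

theorem double_add_two_le (h : IsMinimalTriple s u v w) (hs : PathBound L m s) (hu : u ≤ L + 2)
    {U V : ℕ} (hVU : V < U) (hU : U ≤ L + 2) (hV : V ≤ L + 1) :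
    doubleSum L s U V + 2 ≤ 2 * m + ((if u ≤ U then 1 else 0) + ((if U ≤ w then 1 else 0) +
      (if w ≤ V then 1 else 0) + if V ≤ v then 1 else 0)) := by
  have hvw := h.lt
  have hwu := h.lt'
  have hUV := hs.double U V hVU hU hV
  by_cases hUu : w < U ∧ U < u
  · have hgain := h.doubleSum_lt_of_lt_of_lt hUu.1 hUu.2 L
    obtain hVv | hvV := le_or_gt V v
    · have := hgain V
      have := hs.double w V (by omega) (by omega) hV
      split_ifs <;> omega
    have hwv := hs.double w v hvw (by omega) (by omega)
    obtain hwV | hVw := le_or_gt w V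
    · have := h.doubleSum_lt_of_le hwV hVU hUu.2 L
      split_ifs <;> omega
    · have := h.doubleSum_lt_left hvV hVw L U
      have := hgain v
      split_ifs <;> omega
  · by_cases hV' : v < V ∧ V < w
    · have := h.doubleSum_lt_left hV'.1 hV'.2 L U
      have := hs.double U v (by omega) hU (by omega)
      split_ifs <;> omega
    · split_ifs <;> omega

theorem isSummand (h : IsMinimalTriple s u v w) (hs : PathBound L m s) (hu : u ≤ L + 2)
    (hw : w ≤ L ∨ w = L + 1 ∧ rowSum s 1 (L + 1) < m) :
    IsSummand L m 1 (unitAt 1 u + (unitAt 2 w + unitAt 3 v)) s where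
  le := unitAt_add_le (unitAt_add_le (unitAt_le h.row_three_pos)
    (by simpa [unitAt_apply] using h.row_two_pos)) (by simpa [unitAt_apply] using h.row_one_pos)
  pathBound := h.pathBound hu
  lower U V hUV hV := by
    have hvw := h.lt
    have hwu := h.lt'
    have hlt := h.lower_lt hs.toSingleBound hw hUV hV
    have hle := hs.lower U V hUV hV
    simp (disch := omega) only [singleSum_add, singleSum_unitAt_one, singleSum_unitAt_two,
      singleSum_unitAt_three]
    by_cases hmiss : U < u ∧ (w < U ∨ V < w) ∧ v < V
    · have := hlt hmiss.1 hmiss.2.1 hmiss.2.2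
      split_ifs <;> omega
    · split_ifs <;> omega
  upper U V hU hUV hV := by
    have hvw := h.lt
    have hwu := h.lt'
    have hlt := h.upper_lt hs.toSingleBound (by omega) hU hUV hV
    have hle := hs.upper U V hU hUV hV
    simp (disch := omega) only [singleSum_add, singleSum_unitAt_one, singleSum_unitAt_two,
      singleSum_unitAt_three]
    by_cases hmiss : U < u ∧ (w < U ∨ V < w) ∧ v < V
    · have := hlt hmiss.1 hmiss.2.1 hmiss.2.2
      split_ifs <;> omega
    · split_ifs <;> omega
  double U V hVU hU hV := by
    have hvw := h.lt
    have hwu := h.lt'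
    simp (disch := omega) only [doubleSum_add, doubleSum_unitAt_one, doubleSum_unitAt_two,
      doubleSum_unitAt_three]
    exact h.double_add_two_le hs hu hVU hU hV

end IsMinimalTriple

theorem PathBound.splits_of_triple (hs : PathBound L m s) (hvw : v < w) (hwu : w < u)
    (hu : u ≤ L + 2) (hw : w ≤ L ∨ w = L + 1 ∧ rowSum s 1 (L + 1) < m) (ha : 0 < s (1, u + 3))
    (hb : 0 < s (2, w + 3)) (hc : 0 < s (3, v + 3)) : Splits (PathBound L) m s := by
  obtain ⟨u', v', w', hu', hw', h⟩ := exists_isMinimalTriple hvw hwu ha hb hc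
  exact (h.isSummand hs (hu'.trans hu) (by omega)).splits (Or.inl rfl)

end Triple

section Residual

variable {L m u v V : ℕ} {s : ℕ × ℕ → ℕ}

theorem PathBound.isSummand_of_row_two_pos (hs : PathBound L m s) (ha : 0 < s (1, 3))
    (hb : 0 < s (2, L + 5))
    (hup : ∀ u v, 1 ≤ u → u ≤ v → v ≤ L + 1 → singleSum s 1 u v (L + 1) < m) :
    IsSummand L m 1 (unitAt 1 0 + unitAt 2 (L + 2)) s where
  le := unitAt_add_le (unitAt_le hb) (by simpa [unitAt_apply] using ha)
  pathBound := by
    refine ⟨⟨fun u v _ _ => ?_, fun u v _ _ _ => ?_⟩, fun u v _ _ _ => ?_⟩ <;>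
      simp (disch := omega) only [singleSum_add, doubleSum_add, singleSum_unitAt_one,
        singleSum_unitAt_two, doubleSum_unitAt_one, doubleSum_unitAt_two] <;>
      split_ifs <;> omega
  lower u v huv hv := by
    have := hs.lower u v huv hv
    simp (disch := omega) only [singleSum_add, singleSum_unitAt_one, singleSum_unitAt_two]
    split_ifs <;> omega
  upper u v hu huv hv := by
    have := hup u v hu huv hv
    simp (disch := omega) only [singleSum_add, singleSum_unitAt_one, singleSum_unitAt_two]
    split_ifs <;> omega
  double u v hvu hu hv := by
    have := hs.double u v hvu hu hv
    simp (disch := omega) only [doubleSum_add, doubleSum_unitAt_one, doubleSum_unitAt_two]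
    split_ifs <;> omega

theorem PathBound.isSummand_of_row_two_eq_zero (hs : PathBound L m s) (ha : 0 < s (1, 3))
    (ha' : 0 < s (1, L + 5)) (hb : s (2, L + 5) = 0)
    (hup : ∀ u v, 1 ≤ u → u ≤ v → v ≤ L + 1 → singleSum s 1 u v (L + 1) < m) :
    IsSummand L m 1 (unitAt 1 0 + unitAt 1 (L + 2)) s where
  le := unitAt_add_le (unitAt_le ha') (by simpa [unitAt_apply] using ha)
  pathBound := by
    refine ⟨⟨fun u v _ _ => ?_, fun u v _ _ _ => ?_⟩, fun u v _ _ _ => ?_⟩ <;>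
      simp (disch := omega) only [singleSum_add, doubleSum_add, singleSum_unitAt_one,
        doubleSum_unitAt_one] <;>
      split_ifs <;> omega
  lower u v huv hv := by
    have := hs.lower u v huv hv
    simp (disch := omega) only [singleSum_add, singleSum_unitAt_one]
    split_ifs <;> omega
  upper u v hu huv hv := by
    have := hup u v hu huv hv
    simp (disch := omega) only [singleSum_add, singleSum_unitAt_one]
    split_ifs <;> omega
  double u v hvu hu hv := by
    simp (disch := omega) only [doubleSum_add, doubleSum_unitAt_one]
    obtain huL | rfl : u ≤ L + 1 ∨ u = L + 2 := by omega
    · have hlow := hs.lower 0 v (by omega) (by omega)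
      have hupp := hup u (L + 1) (by omega) huL le_rfl
      have hb3 := rowSum_succ s 2 (L + 2)
      simp only [singleSum, doubleSum, rowSum_zero, zero_add, add_assoc, Nat.reduceAdd] at *
      split_ifs <;> omega
    · have := hs.double (L + 2) v hvu hu hv
      split_ifs <;> omega

theorem PathBound.splits_of_upper_lt (hs : PathBound L m s) (ha : 0 < s (1, 3))
    (ha' : 0 < s (1, L + 5))
    (hup : ∀ u v, 1 ≤ u → u ≤ v → v ≤ L + 1 → singleSum s 1 u v (L + 1) < m) :
    Splits (PathBound L) m s := by
  obtain hb | hb := Nat.eq_zero_or_pos (s (2, L + 5))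
  · exact (hs.isSummand_of_row_two_eq_zero ha ha' hb hup).splits (Or.inl rfl)
  · exact (hs.isSummand_of_row_two_pos ha hb hup).splits (Or.inl rfl)

theorem PathBound.isSummand_of_double_lt (hs : PathBound L m s) (ha : 0 < s (1, 3))
    (hb : 0 < s (2, L + 4)) (hc : s (3, L + 4) = 0)
    (hdouble : ∀ v ≤ L, doubleSum L s (L + 2) v < 2 * m) :
    IsSummand L m 1 (unitAt 1 0 + unitAt 2 (L + 1)) s where
  le := unitAt_add_le (unitAt_le hb) (by simpa [unitAt_apply] using ha)
  pathBound := by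
    refine ⟨⟨fun u v _ _ => ?_, fun u v _ _ _ => ?_⟩, fun u v _ _ _ => ?_⟩ <;>
      simp (disch := omega) only [singleSum_add, doubleSum_add, singleSum_unitAt_one,
        singleSum_unitAt_two, doubleSum_unitAt_one, doubleSum_unitAt_two] <;>
      split_ifs <;> omega
  lower u v huv hv := by
    have := hs.lower u v huv hv
    simp (disch := omega) only [singleSum_add, singleSum_unitAt_one, singleSum_unitAt_two]
    split_ifs <;> omega
  upper u v hu huv hv := by
    simp (disch := omega) only [singleSum_add, singleSum_unitAt_one, singleSum_unitAt_two]
    obtain hvL | rfl : v ≤ L ∨ v = L + 1 := by omega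
    · have hlow := hs.lower u v huv hvL
      have hc2 := rowSum_succ s 3 (L + 1)
      have ha1 := rowSum_one s 1
      simp only [singleSum, rowSum_zero, add_assoc, Nat.reduceAdd] at *
      split_ifs <;> omega
    · have := hs.upper u (L + 1) hu huv hv
      split_ifs <;> omega
  double u v hvu hu hv := by
    simp (disch := omega) only [doubleSum_add, doubleSum_unitAt_one, doubleSum_unitAt_two]
    by_cases huv : u = L + 2 ∧ v ≤ L
    · obtain ⟨rfl, hvL⟩ := huv
      have := hdouble v hvL
      split_ifs <;> omega
    · have := hs.double u v hvu hu hv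
      split_ifs <;> omega

/-- The configuration that remains when neither two corners nor a triple can be split off; `V` is
the first column in which row `3` does not vanish. -/
structure IsResidual (L m : ℕ) (s : ℕ × ℕ → ℕ) (V : ℕ) : Prop where
  row_one_first_pos : 0 < s (1, 3)
  row_one_last_pos : 0 < s (1, L + 5)
  row_two_pos : 0 < s (2, L + 4)
  row_three_last : s (3, L + 4) = 0
  le : V ≤ L
  row_three_pos : 0 < s (3, V + 3)
  rowSum_one_eq : rowSum s 1 (L + 1) = m
  rowSum_two_eq : ∀ x, V < x → x ≤ L + 1 → rowSum s 2 x = rowSum s 2 (V + 1)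
  rowSum_three_eq_zero : rowSum s 3 V = 0

namespace IsResidual

theorem first_eq (h : IsResidual L m s V) (hs : SingleBound L m s)
    (hup : ∃ u v, 1 ≤ u ∧ u ≤ v ∧ v ≤ L + 1 ∧ m ≤ singleSum s 1 u v (L + 1)) :
    s (1, 3) = s (1, L + 4) + s (2, L + 4) := by
  obtain ⟨u, v, hu, huv, hv, hle⟩ := hup
  have hR := h.rowSum_one_eq
  have hb := h.row_two_pos
  have hc := h.row_three_last
  have ha1 := rowSum_one s 1
  have ha2 := rowSum_succ s 1 (L + 1)
  have hb2 := rowSum_succ s 2 (L + 1)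
  have hc2 := rowSum_succ s 3 (L + 1)
  have hlast := hs.upper (L + 1) (L + 1) (by omega) le_rfl le_rfl
  obtain hvL | rfl : v ≤ L ∨ v = L + 1 := by omega
  · have hlow := hs.lower u v huv hvL
    simp only [singleSum, rowSum_zero, add_assoc, Nat.reduceAdd] at *
    omega
  obtain huL | rfl : u ≤ L ∨ u = L + 1 := by omega
  · have hlow := hs.lower u L huL le_rfl
    have hc1 := rowSum_succ s 3 L
    simp only [singleSum, rowSum_zero, add_assoc, Nat.reduceAdd] at *
    omega
  · simp only [singleSum, add_assoc, Nat.reduceAdd] at *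
    omega

theorem total_eq (h : IsResidual L m s V) (hs : PathBound L m s)
    (hdouble : ∃ v ≤ L, 2 * m ≤ doubleSum L s (L + 2) v) :
    s (1, L + 4) + s (1, L + 5) + s (2, L + 5) + rowSum s 2 (V + 1) + rowSum s 3 (L + 1) = m := by
  obtain ⟨v, hvL, hle⟩ := hdouble
  have hV := h.le
  have hR := h.rowSum_one_eq
  have hc := h.row_three_last
  have hc0 := h.rowSum_three_eq_zero
  have ha2 := rowSum_succ s 1 (L + 1)
  have ha3 := rowSum_succ s 1 (L + 2)
  have hb3 := rowSum_succ s 2 (L + 2)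
  have hc2 := rowSum_succ s 3 (L + 1)
  have hfull := hs.double (L + 2) V (by omega) le_rfl (by omega)
  have hmono : rowSum s 2 (v + 1) ≤ rowSum s 2 (V + 1) :=
    (rowSum_mono s 2 (by omega)).trans_eq (h.rowSum_two_eq (L + 1) (by omega) le_rfl)
  have hnonneg := rowSum_nonneg s 3 v
  simp only [doubleSum, add_assoc, Nat.reduceAdd] at *
  omega

theorem row_two_le (h : IsResidual L m s V) (hs : PathBound L m s)
    (hdouble : ∃ v ≤ L, 2 * m ≤ doubleSum L s (L + 2) v) : s (2, L + 4) ≤ s (1, L + 5) := by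
  have htotal := h.total_eq hs hdouble
  have hV := h.le
  have hR := h.rowSum_one_eq
  have hc := h.row_three_last
  have hc0 := h.rowSum_three_eq_zero
  have ha2 := rowSum_succ s 1 (L + 1)
  have hb2 := rowSum_succ s 2 (L + 1)
  have hb3 := rowSum_succ s 2 (L + 2)
  have hc2 := rowSum_succ s 3 (L + 1)
  have hfull := hs.double (L + 1) V (by omega) (by omega) (by omega)
  simp only [doubleSum, add_assoc, Nat.reduceAdd] at *
  omega

end IsResidual

/-- A residual configuration in which one path of each remaining kind is full. Here `u` is the last
column up to `L` in which row `1` does not vanish, and `v` is that of row `3`. -/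
structure IsTight (L m : ℕ) (s : ℕ × ℕ → ℕ) (u v V : ℕ) : Prop extends IsResidual L m s V where
  one_le : 1 ≤ u
  le_last : u ≤ L
  lt : v < u
  le_v : V ≤ v
  row_one_pos : 0 < s (1, u + 3)
  row_three_pos' : 0 < s (3, v + 3)
  first_eq : s (1, 3) = s (1, L + 4) + s (2, L + 4)
  row_two_le : s (2, L + 4) ≤ s (1, L + 5)
  rowSum_one_eq' : rowSum s 1 (u + 1) = m
  rowSum_three_eq : rowSum s 3 (v + 1) = rowSum s 3 (L + 1)
  total_eq :
    s (1, L + 4) + s (1, L + 5) + s (2, L + 5) + rowSum s 2 (V + 1) + rowSum s 3 (L + 1) = m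

theorem IsResidual.exists_isTight (h : IsResidual L m s V) (hs : PathBound L m s)
    (hup : ∃ u v, 1 ≤ u ∧ u ≤ v ∧ v ≤ L + 1 ∧ m ≤ singleSum s 1 u v (L + 1))
    (hdouble : ∃ v ≤ L, 2 * m ≤ doubleSum L s (L + 2) v) : ∃ u v, IsTight L m s u v V := by
  have hfirst := h.first_eq hs.toSingleBound hup
  have htotal := h.total_eq hs hdouble
  have hle := h.row_two_le hs hdouble
  have hR := h.rowSum_one_eq
  have hC : 0 < rowSum s 3 (L + 1) :=
    (Nat.cast_pos.2 h.row_three_pos).trans_le (le_rowSum s 3 (Nat.lt_succ_of_le h.le))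
  have hfew : rowSum s 1 1 < rowSum s 1 (L + 1) := by
    have hV := rowSum_nonneg s 2 (V + 1)
    rw [rowSum_one]
    omega
  obtain ⟨u', _, hu'L, hau'⟩ := exists_pos_of_rowSum_lt hfew
  obtain ⟨u, _, huL, hau, hau0⟩ :=
    exists_last (P := fun k => 0 < s (1, k + 3)) (Nat.le_of_lt_succ hu'L) hau'
  obtain ⟨v, hVv, hvL, hcv, hcv0⟩ :=
    exists_last (P := fun k => 0 < s (3, k + 3)) h.le h.row_three_pos
  have hau_eq : rowSum s 1 (u + 1) = m :=
    (rowSum_eq_of_zero (by omega) fun k hk hkL =>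
      Nat.eq_zero_of_not_pos (hau0 k hk (by omega))).trans hR
  have hcv_eq : rowSum s 3 (v + 1) = rowSum s 3 (L + 1) :=
    rowSum_eq_of_zero (by omega) fun k hk hkL => Nat.eq_zero_of_not_pos (hcv0 k hk (by omega))
  have hvu : v < u := by
    by_contra hvu
    have hlow := hs.lower u u le_rfl huL
    have h2 := rowSum_mono s 2 (show u ≤ u + 1 by omega)
    have h3 := rowSum_mono s 3 (show u ≤ v by omega)
    have h3' := rowSum_succ s 3 v
    rw [singleSum, rowSum_zero] at hlow
    omega
  exact ⟨u, v, h, by omega, huL, hvu, hVv, hau, hcv, hfirst, hle, hau_eq, hcv_eq, htotal⟩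

/-- The summand of level `2` that splits off from a residual configuration; the parameters are those
of `IsTight`. -/
def residualBlock (L u v : ℕ) : ℕ × ℕ → ℕ :=
  unitAt 1 0 + (unitAt 1 u + (unitAt 1 (L + 2) + (unitAt 2 (L + 1) + unitAt 3 v)))

namespace IsTight

variable {x y : ℕ}

theorem lower_add_one_le (h : IsTight L m s u v V) (hs : SingleBound L m s) (hxy : x ≤ y)
    (hy : y ≤ L) :
    singleSum s 0 x y L + 1 ≤ m + ((if u ≤ x then 1 else 0) + if y ≤ v then 1 else 0) := by
  have hle := hs.lower x y hxy hy
  have hVv := h.le_v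
  obtain hmiss | hmiss := em' (x < u ∧ v < y)
  · split_ifs <;> omega
  rw [if_neg (by omega), if_neg (by omega)]
  have hb := h.rowSum_two_eq (y + 1) (by omega) (by omega)
  have hc := rowSum_mono s 3 (show v + 1 ≤ y by omega)
  have hc' := rowSum_succ s 3 v
  have hcpos := h.row_three_pos'
  have hceq := h.rowSum_three_eq
  obtain hxv | hvx := le_or_gt x v
  · have hlow := hs.lower x v hxv (by omega)
    have hb' := h.rowSum_two_eq (v + 1) (by omega) (by omega)
    simp only [singleSum, rowSum_zero] at *
    omega
  · have hb' := h.rowSum_two_eq x (by omega) (by omega)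
    have ha := rowSum_mono s 1 (show x + 1 ≤ u by omega)
    have ha' := rowSum_succ s 1 u
    have haeq := h.rowSum_one_eq'
    have hapos := h.row_one_pos
    simp only [singleSum, rowSum_zero] at *
    omega

theorem upper_add_two_le (h : IsTight L m s u v V) (hs : SingleBound L m s) (hx : 1 ≤ x)
    (hxy : x ≤ y) (hy : y ≤ L + 1) :
    singleSum s 1 x y (L + 1) + 2 ≤ m + ((if u ≤ x then 1 else 0) + (if y ≤ v then 1 else 0) +
      if y = L + 1 then 1 else 0) := by
  have hc2 : rowSum s 3 (L + 2) = rowSum s 3 (L + 1) + s (3, L + 4) := rowSum_succ s 3 (L + 1)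
  have ha1 := rowSum_one s 1
  have hc := h.row_three_last
  have hfirst := h.first_eq
  have hb := h.row_two_pos
  have hvu := h.lt
  have huL := h.le_last
  obtain hyL | rfl : y ≤ L ∨ y = L + 1 := by omega
  · have hlow := h.lower_add_one_le hs hxy hyL
    simp only [singleSum, rowSum_zero, add_assoc, Nat.reduceAdd] at *
    split_ifs at * <;> omega
  have hle := hs.upper x (L + 1) hx hxy hy
  obtain hux | hxu := le_or_gt u x
  · split_ifs <;> omega
  have hlow := h.lower_add_one_le hs (show x ≤ L by omega) le_rfl
  have hb2 := rowSum_succ s 2 (L + 1)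
  have hcL := rowSum_mono s 3 (show L ≤ L + 1 by omega)
  rw [if_neg (by omega), if_neg (by omega)] at hlow
  simp only [singleSum, rowSum_zero, add_assoc, Nat.reduceAdd] at *
  split_ifs <;> omega

theorem doubleSum_lt_right (h : IsTight L m s u v V) (hvy : v < y) (hyL : y ≤ L) (x : ℕ) :
    doubleSum L s x y < doubleSum L s x v := by
  have hb := h.rowSum_two_eq (v + 1) (Nat.lt_succ_of_le h.le_v) (by omega)
  have hb' := h.rowSum_two_eq (y + 1) (by have := h.le_v; omega) (by omega)
  have hc := rowSum_mono s 3 (show v + 1 ≤ y by omega)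
  have hc' := rowSum_succ s 3 v
  have hcpos := h.row_three_pos'
  simp only [doubleSum]
  omega

theorem doubleSum_lt_left (h : IsTight L m s u v V) (hVx : V < x) (hxu : x < u) (y : ℕ) :
    doubleSum L s x y < doubleSum L s u y := by
  have huL := h.le_last
  have hb := h.rowSum_two_eq x hVx (by omega)
  have hb' := h.rowSum_two_eq u (by omega) (by omega)
  have ha := rowSum_mono s 1 (show x + 1 ≤ u by omega)
  have ha' := rowSum_succ s 1 u
  have hapos := h.row_one_pos
  simp only [doubleSum]
  omega

theorem doubleSum_lt_of_le (h : IsTight L m s u v V) (hxV : x ≤ V) (hyx : y < x) :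
    doubleSum L s x y < 2 * m := by
  have hVv := h.le_v
  have hvu := h.lt
  have hb := rowSum_mono s 2 (show y + 1 ≤ x by omega)
  have hbL := h.rowSum_two_eq (L + 1) (by have := h.le; omega) le_rfl
  have hb2 : rowSum s 2 (L + 2) = rowSum s 2 (L + 1) + s (2, L + 4) := rowSum_succ s 2 (L + 1)
  have hb3 := rowSum_succ s 2 (L + 2)
  have hc2 : rowSum s 3 (L + 2) = rowSum s 3 (L + 1) + s (3, L + 4) := rowSum_succ s 3 (L + 1)
  have hc := rowSum_nonneg s 3 y
  have ha := rowSum_mono s 1 (show x + 1 ≤ u by omega)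
  have ha' := rowSum_succ s 1 u
  have haeq := h.rowSum_one_eq'
  have hapos := h.row_one_pos
  have hclast := h.row_three_last
  have hle := h.row_two_le
  have htotal := h.total_eq
  simp only [doubleSum, add_assoc, Nat.reduceAdd] at *
  omega

theorem double_add_two_le (h : IsTight L m s u v V) (hs : PathBound L m s) (hyx : y < x)
    (hx : x ≤ L + 2) (hy : y ≤ L + 1) :
    doubleSum L s x y + 2 ≤ 2 * m + ((if u ≤ x then 1 else 0) + (if y ≤ v then 1 else 0) +
      if y = L + 1 then 1 else 0) := by
  have hle := hs.double x y hyx hx hy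
  have hVv := h.le_v
  have hvu := h.lt
  have huL := h.le_last
  obtain hxV | hVx := le_or_gt x V
  · have := h.doubleSum_lt_of_le hxV hyx
    split_ifs <;> omega
  obtain hux | hxu := le_or_gt u x
  · obtain hmiss | hmiss := em' (v < y ∧ y ≤ L)
    · split_ifs <;> omega
    have := h.doubleSum_lt_right hmiss.1 hmiss.2 x
    have := hs.double x v (by omega) hx (by omega)
    split_ifs <;> omega
  have hgain := h.doubleSum_lt_left hVx hxu y
  obtain hyv | hvy := le_or_gt y v
  · have := hs.double u y (by omega) (by omega) hy
    split_ifs <;> omega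
  · have := h.doubleSum_lt_right hvy (by omega) u
    have := hs.double u v hvu (by omega) (by omega)
    split_ifs <;> omega

theorem pathBound (h : IsTight L m s u v V) : PathBound L 2 (residualBlock L u v) := by
  have hvu := h.lt
  have huL := h.le_last
  refine ⟨⟨fun x y _ _ => ?_, fun x y _ _ _ => ?_⟩, fun x y _ _ _ => ?_⟩ <;>
    simp (disch := omega) only [residualBlock, singleSum_add, doubleSum_add, singleSum_unitAt_one,
      singleSum_unitAt_two, singleSum_unitAt_three, doubleSum_unitAt_one, doubleSum_unitAt_two,
      doubleSum_unitAt_three] <;>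
    split_ifs <;> omega

theorem residualBlock_le (h : IsTight L m s u v V) : residualBlock L u v ≤ s := by
  have huL := h.le_last
  have hu := h.one_le
  refine unitAt_add_le (unitAt_add_le (unitAt_add_le (unitAt_add_le (unitAt_le h.row_three_pos')
    ?_) ?_) ?_) ?_
  · simpa [unitAt_apply] using h.row_two_pos
  · simpa [unitAt_apply] using h.row_one_last_pos
  · simpa [unitAt_apply, show u ≠ L + 2 by omega] using h.row_one_pos
  · simpa [unitAt_apply, show ¬ 0 = u by omega] using h.row_one_first_pos

theorem isSummand (h : IsTight L m s u v V) (hs : PathBound L m s) :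
    IsSummand L m 2 (residualBlock L u v) s where
  le := h.residualBlock_le
  pathBound := h.pathBound
  lower x y hxy hy := by
    have hvu := h.lt
    have huL := h.le_last
    have hle := h.lower_add_one_le hs.toSingleBound hxy hy
    simp (disch := omega) only [residualBlock, singleSum_add, singleSum_unitAt_one,
      singleSum_unitAt_two, singleSum_unitAt_three]
    split_ifs at * <;> omega
  upper x y hx hxy hy := by
    have hvu := h.lt
    have huL := h.le_last
    have hu := h.one_le
    have hle := h.upper_add_two_le hs.toSingleBound hx hxy hy
    simp (disch := omega) only [residualBlock, singleSum_add, singleSum_unitAt_one,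
      singleSum_unitAt_two, singleSum_unitAt_three]
    split_ifs at * <;> omega
  double x y hyx hx hy := by
    have hvu := h.lt
    have huL := h.le_last
    have hle := h.double_add_two_le hs hyx hx hy
    simp (disch := omega) only [residualBlock, doubleSum_add, doubleSum_unitAt_one,
      doubleSum_unitAt_two, doubleSum_unitAt_three]
    split_ifs at * <;> omega

end IsTight

theorem IsResidual.splits (h : IsResidual L m s V) (hs : PathBound L m s) :
    Splits (PathBound L) m s := by
  by_cases hup : ∀ u v, 1 ≤ u → u ≤ v → v ≤ L + 1 → singleSum s 1 u v (L + 1) < m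
  · exact hs.splits_of_upper_lt h.row_one_first_pos h.row_one_last_pos hup
  by_cases hdouble : ∀ v ≤ L, doubleSum L s (L + 2) v < 2 * m
  · exact (hs.isSummand_of_double_lt h.row_one_first_pos h.row_two_pos h.row_three_last
      hdouble).splits (Or.inl rfl)
  push Not at hup hdouble
  obtain ⟨u, v, ht⟩ := h.exists_isTight hs hup hdouble
  exact (ht.isSummand hs).splits (Or.inr rfl)

theorem SingleBound.rowSum_one_le (hs : SingleBound L m s) : rowSum s 1 (L + 1) ≤ m := by
  have hlow := hs.lower L L le_rfl le_rfl
  have hb := rowSum_mono s 2 (show L ≤ L + 1 by omega)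
  have hc := rowSum_mono s 3 (show L ≤ L + 1 by omega)
  rw [singleSum, rowSum_zero] at hlow
  omega

theorem SingleBound.row_one_first_pos (hs : SingleBound L m s) (hR : rowSum s 1 (L + 1) = m)
    (hb : 0 < s (2, L + 4)) : 0 < s (1, 3) := by
  have hupp := hs.upper (L + 1) (L + 1) (by omega) le_rfl le_rfl
  have ha := rowSum_mono s 1 (show L + 1 ≤ L + 1 + 1 by omega)
  have ha1 := rowSum_one s 1
  have hb2 := rowSum_succ s 2 (L + 1)
  have hc := rowSum_mono s 3 (show L + 1 ≤ L + 1 + 1 by omega)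
  simp only [singleSum, add_assoc, Nat.reduceAdd] at *
  omega

theorem PathBound.exists_isResidual (hs : PathBound L m s) (hm : 0 < m)
    (hns : ¬ Splits (PathBound L) m s) : ∃ V, IsResidual L m s V := by
  obtain ⟨v, w, u, hvw, hwu, hu, hc, hb, ha⟩ :
      ∃ v w u, v < w ∧ w < u ∧ u ≤ L + 2 ∧ 0 < s (3, v + 3) ∧ 0 < s (2, w + 3) ∧
        0 < s (1, u + 3) := by
    by_contra! hno
    obtain ⟨U, V, hcut⟩ := exists_isCut fun v w u hvw hwu hu hc hb =>
      Nat.le_zero.1 (hno v w u hvw hwu hu hc hb)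
    exact hns (hs.splits_of_isCut hm hcut)
  have htriple {v w u : ℕ} (hvw : v < w) (hwu : w < u) (hu : u ≤ L + 2)
      (hc : 0 < s (3, v + 3)) (hb : 0 < s (2, w + 3)) (ha : 0 < s (1, u + 3)) :
      w = L + 1 ∧ ¬ rowSum s 1 (L + 1) < m := by
    by_contra hw
    refine hns (hs.splits_of_triple hvw hwu hu ?_ ha hb hc)
    by_contra hw'
    exact hw ⟨by omega, fun hlt => hw' (Or.inr ⟨by omega, hlt⟩)⟩
  obtain ⟨rfl, hR⟩ := htriple hvw hwu hu hc hb ha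
  obtain rfl : u = L + 2 := by omega
  have hR : rowSum s 1 (L + 1) = m := le_antisymm hs.rowSum_one_le (not_lt.1 hR)
  have hfirst := hs.row_one_first_pos hR hb
  obtain ⟨V, -, hVv, hcV, hcV0⟩ := exists_first (P := fun k => 0 < s (3, k + 3)) (Nat.zero_le v) hc
  refine ⟨V, hfirst, ha, hb, ?_, by omega, hcV, hR, fun x hVx hxL => ?_, ?_⟩
  · refine Nat.eq_zero_of_not_pos fun hcL => hns ?_
    exact (hs.isSummand_corners hfirst hcL).splits (Or.inl rfl)
  · refine (rowSum_eq_of_zero hVx fun k hk hkx => Nat.eq_zero_of_not_pos fun hbk => ?_).symm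
    have := (htriple hk (show k < L + 2 by omega) le_rfl hcV hbk ha).1
    omega
  · exact (rowSum_eq_of_zero (Nat.zero_le V) fun k hk hkV =>
      Nat.eq_zero_of_not_pos (hcV0 k hk hkV)).symm

theorem PathBound.splits (hs : PathBound L m s) (hm : 0 < m) : Splits (PathBound L) m s := by
  by_contra hns
  obtain ⟨V, h⟩ := hs.exists_isResidual hm hns
  exact hns (h.splits hs)

end Residual

section Paths

variable {l l' : List (ℕ × ℕ)} {β γ δ ε : ℕ × ℕ} {p x y : ℕ}

/-- `l` is a sequence of steps that leads from `β` to `γ`. -/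
structure IsPath (l : List (ℕ × ℕ)) (β γ : ℕ × ℕ) : Prop where
  isChain : l.IsChain RootStep
  head? : l.head? = some β
  getLast? : l.getLast? = some γ

theorem IsPath.ne_nil (h : IsPath l β γ) : l ≠ [] := by
  rintro rfl
  cases h.head?

theorem isPath_singleton (β : ℕ × ℕ) : IsPath [β] β β :=
  ⟨List.isChain_singleton β, rfl, rfl⟩

theorem IsPath.append (h : IsPath l β γ) (hstep : RootStep γ δ) (h' : IsPath l' δ ε) :
    IsPath (l ++ l') β ε := by
  refine ⟨h.isChain.append h'.isChain ?_, ?_, ?_⟩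
  · rw [h.getLast?, h'.head?]
    rintro _ ⟨⟩ _ ⟨⟩
    exact hstep
  · rw [List.head?_append, h.head?, Option.some_or]
  · rw [List.getLast?_append, h'.getLast?, Option.some_or]

theorem isPath_cons_iff : IsPath (δ :: l) β γ ↔
    δ = β ∧ (l = [] ∧ γ = β ∨ ∃ ε, RootStep β ε ∧ IsPath l ε γ) := by
  constructor
  · rintro ⟨hchain, ⟨⟩, hlast⟩
    refine ⟨rfl, ?_⟩
    cases l with
    | nil =>
      cases hlast
      exact Or.inl ⟨rfl, rfl⟩
    | cons ε l =>
      rw [List.isChain_cons_cons] at hchain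
      exact Or.inr ⟨ε, hchain.1, hchain.2, rfl, by rwa [List.getLast?_cons_cons] at hlast⟩
  · rintro ⟨rfl, ⟨rfl, rfl⟩ | ⟨ε, hstep, h⟩⟩
    · exact isPath_singleton γ
    · exact (isPath_singleton δ).append hstep h

theorem RootStep.le (h : RootStep β γ) : β ≤ γ := by
  simp only [RootStep] at h
  exact Prod.mk_le_mk.2 (by omega)

theorem IsPath.bounds_of_mem (h : IsPath l β γ) (hδ : δ ∈ l) : β ≤ δ ∧ δ ≤ γ := by
  induction l generalizing β δ with
  | nil => exact absurd rfl h.ne_nil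
  | cons ε l ih =>
    obtain ⟨rfl, ⟨rfl, rfl⟩ | ⟨ε', hstep, htail⟩⟩ := isPath_cons_iff.1 h
    · obtain rfl := List.mem_singleton.1 hδ
      exact ⟨le_rfl, le_rfl⟩
    · obtain rfl | hδ := List.mem_cons.1 hδ
      · exact ⟨le_rfl, hstep.le.trans (ih htail (List.mem_of_head? htail.head?)).2⟩
      · exact ⟨hstep.le.trans (ih htail hδ).1, (ih htail hδ).2⟩

theorem IsPath.le (h : IsPath l β γ) : β ≤ γ :=
  (h.bounds_of_mem (List.mem_of_head? h.head?)).2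

theorem IsPath.inR_of_mem {n i : ℕ} (h : IsPath l (p, i) γ) (hp : 1 ≤ p) (hi : γ.1 ≤ i)
    (hγ : γ.1 + γ.2 ≤ 2 * n) (hδ : δ ∈ l) : inR n i δ := by
  obtain ⟨⟨hpδ, hiδ⟩, hδγ⟩ := h.bounds_of_mem hδ
  exact ⟨hp.trans hpδ, hδγ.1.trans hi, hiδ, (add_le_add hδγ.1 hδγ.2).trans hγ⟩

theorem isType1_iff {n i : ℕ} (hi : i ≤ n) : IsType1 n i l ↔
    IsPath l (1, i) (i, 2 * n - i - 1) ∨ IsPath l (1, i + 1) (i, 2 * n - i) := by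
  constructor
  · rintro ⟨-, hl, -, ⟨hhead, hlast⟩ | ⟨hhead, hlast⟩⟩
    · exact Or.inl ⟨hl, hhead, hlast⟩
    · exact Or.inr ⟨hl, hhead, hlast⟩
  · rintro (h | h)
    · exact ⟨h.ne_nil, h.isChain, fun β hβ => h.inR_of_mem le_rfl le_rfl (by dsimp only; omega) hβ,
        Or.inl ⟨h.head?, h.getLast?⟩⟩
    · refine ⟨h.ne_nil, h.isChain, fun β hβ => ?_, Or.inr ⟨h.head?, h.getLast?⟩⟩
      obtain ⟨⟨h1, hβi⟩, hβ⟩ := h.bounds_of_mem hβ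
      exact ⟨h1, hβ.1, (Nat.le_succ i).trans hβi,
        (add_le_add hβ.1 hβ.2).trans (by dsimp only; omega)⟩

theorem isType2_iff {n i : ℕ} (hi : i ≤ n) : IsType2 n i l l' ↔
    ∃ j, 1 ≤ j ∧ j < i ∧ IsPath l (1, i) (j, 2 * n - j) ∧
      IsPath l' (2, i) (j + 1, 2 * n - j - 1) ∧ l.Disjoint l' := by
  constructor
  · rintro ⟨j, hj, hji, -, -, hl, hl', -, -, hhead, hhead', hlast, hlast', hd⟩
    exact ⟨j, hj, hji, ⟨hl, hhead, hlast⟩, ⟨hl', hhead', hlast'⟩, fun β hβ hβ' => hd β ⟨hβ, hβ'⟩⟩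
  · rintro ⟨j, hj, hji, h, h', hd⟩
    exact ⟨j, hj, hji, h.ne_nil, h'.ne_nil, h.isChain, h'.isChain,
      fun β hβ => h.inR_of_mem le_rfl hji.le (by dsimp only; omega) hβ,
      fun β hβ => h'.inR_of_mem one_le_two hji (by dsimp only; omega) hβ,
      h.head?, h'.head?, h.getLast?, h'.getLast?, fun β hβ => hd hβ.1 hβ.2⟩

/-- The horizontal path in row `p` from column `x` to column `y`. -/
def rowPath (p x y : ℕ) : List (ℕ × ℕ) := (List.Ico x (y + 1)).map fun k => (p, k + 3)

theorem mem_rowPath : β ∈ rowPath p x y ↔ β.1 = p ∧ x + 3 ≤ β.2 ∧ β.2 ≤ y + 3 := by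
  obtain ⟨q, k⟩ := β
  simp only [rowPath, List.mem_map, List.Ico.mem, Prod.mk.injEq]
  constructor
  · rintro ⟨j, hj, rfl, rfl⟩
    omega
  · rintro ⟨rfl, hk⟩
    exact ⟨k - 3, by omega, rfl, by omega⟩

theorem rowPath_self (p x : ℕ) : rowPath p x x = [(p, x + 3)] := by
  simp [rowPath, List.Ico.succ_singleton]

theorem rowPath_eq_cons (h : x < y) : rowPath p x y = (p, x + 3) :: rowPath p (x + 1) y := by
  rw [rowPath, List.Ico.eq_cons (by omega), List.map_cons, rowPath]

theorem isPath_rowPath (p : ℕ) (h : x ≤ y) : IsPath (rowPath p x y) (p, x + 3) (p, y + 3) := by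
  obtain ⟨d, rfl⟩ := Nat.exists_eq_add_of_le h
  induction d generalizing x with
  | zero => exact (rowPath_self p x).symm ▸ isPath_singleton _
  | succ d ih =>
    rw [rowPath_eq_cons (by omega), isPath_cons_iff, show x + (d + 1) = x + 1 + d by omega]
    exact ⟨rfl, Or.inr ⟨(p, x + 1 + 3), Or.inl ⟨rfl, add_right_comm x 1 3⟩, ih (by omega)⟩⟩

theorem sum_rowPath (s : ℕ × ℕ → ℕ) (p : ℕ) (h : x ≤ y) :
    (((rowPath p x y).map s).sum : ℤ) = rowSum s p (y + 1) - rowSum s p x := by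
  obtain ⟨d, rfl⟩ := Nat.exists_eq_add_of_le h
  induction d generalizing x with
  | zero => simp [rowPath_self, rowSum_succ]
  | succ d ih =>
    rw [rowPath_eq_cons (by omega), List.map_cons, List.sum_cons, Nat.cast_add,
      show x + (d + 1) = x + 1 + d by omega, ih (by omega), rowSum_succ s p x]
    ring

theorem IsPath.eq_rowPath_or {p' : ℕ} (h : IsPath l (p, x + 3) (p', y + 3)) :
    (p' = p ∧ x ≤ y ∧ l = rowPath p x y) ∨
      ∃ v l', x ≤ v ∧ l = rowPath p x v ++ l' ∧ IsPath l' (p + 1, v + 3) (p', y + 3) := by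
  induction l generalizing x with
  | nil => exact absurd rfl h.ne_nil
  | cons δ l ih =>
    obtain ⟨rfl, ⟨rfl, hend⟩ | ⟨⟨q, k⟩, hstep, h⟩⟩ := isPath_cons_iff.1 h
    · obtain ⟨rfl, rfl⟩ : p' = p ∧ y = x := by simpa using hend
      exact Or.inl ⟨rfl, le_rfl, (rowPath_self p' y).symm⟩
    obtain ⟨rfl, rfl⟩ | ⟨rfl, rfl⟩ : (q = p ∧ k = x + 1 + 3) ∨ (q = p + 1 ∧ k = x + 3) := by
      simpa only [RootStep, add_right_comm] using hstep
    · obtain ⟨rfl, hxy, rfl⟩ | ⟨v, l', hv, rfl, h'⟩ := ih h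
      · exact Or.inl ⟨rfl, by omega, (rowPath_eq_cons hxy).symm⟩
      · exact Or.inr ⟨v, l', by omega, by rw [rowPath_eq_cons hv, List.cons_append], h'⟩
    · exact Or.inr ⟨x, l, le_rfl, by rw [rowPath_self, List.singleton_append], h⟩

theorem isPath_same_row_iff :
    IsPath l (p, x + 3) (p, y + 3) ↔ x ≤ y ∧ l = rowPath p x y := by
  refine ⟨fun h => ?_, fun ⟨hxy, hl⟩ => hl ▸ isPath_rowPath p hxy⟩
  obtain ⟨-, h⟩ | ⟨v, l', -, -, h'⟩ := h.eq_rowPath_or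
  · exact h
  · exact absurd h'.le.1 (by dsimp only; omega)

theorem isPath_succ_row_iff {p' : ℕ} (hp : p < p') : IsPath l (p, x + 3) (p', y + 3) ↔
    ∃ v l', x ≤ v ∧ l = rowPath p x v ++ l' ∧ IsPath l' (p + 1, v + 3) (p', y + 3) := by
  refine ⟨fun h => h.eq_rowPath_or.resolve_left fun h' => hp.ne' h'.1, ?_⟩
  rintro ⟨v, l', hv, rfl, h⟩
  exact (isPath_rowPath p hv).append (δ := (p + 1, v + 3)) (Or.inr ⟨rfl, rfl⟩) h

theorem isPath_next_row_iff : IsPath l (p, x + 3) (p + 1, y + 3) ↔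
    ∃ v, x ≤ v ∧ v ≤ y ∧ l = rowPath p x v ++ rowPath (p + 1) v y := by
  simp only [isPath_succ_row_iff (Nat.lt_succ_self p), isPath_same_row_iff]
  grind

theorem isPath_next_next_row_iff : IsPath l (p, x + 3) (p + 2, y + 3) ↔
    ∃ u v, x ≤ u ∧ u ≤ v ∧ v ≤ y ∧
      l = rowPath p x u ++ (rowPath (p + 1) u v ++ rowPath (p + 2) v y) := by
  rw [isPath_succ_row_iff (by omega)]
  simp only [isPath_next_row_iff (p := p + 1), add_assoc, Nat.reduceAdd]
  constructor
  · rintro ⟨u, _, hu, rfl, v, huv, hv, rfl⟩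
    exact ⟨u, v, hu, huv, hv, rfl⟩
  · rintro ⟨u, v, hu, huv, hv, rfl⟩
    exact ⟨u, _, hu, rfl, v, huv, hv, rfl⟩

theorem sum_singlePath (s : ℕ × ℕ → ℕ) {u v : ℕ} (hu : x ≤ u) (huv : u ≤ v) (hv : v ≤ y) :
    (((rowPath 1 x u ++ (rowPath 2 u v ++ rowPath 3 v y)).map s).sum : ℤ) =
      singleSum s x u v y := by
  simp only [List.map_append, List.sum_append, Nat.cast_add, sum_rowPath, hu, huv, hv, singleSum]
  ring

end Paths

section Membership

variable {n m M : ℕ} {s : ℕ × ℕ → ℕ} {l l' : List (ℕ × ℕ)}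

theorem isType1_three_iff (hM : 2 * n = M + 6) : IsType1 n 3 l ↔ ∃ u v,
    (u ≤ v ∧ v < M ∧ l = rowPath 1 0 u ++ (rowPath 2 u v ++ rowPath 3 v (M - 1))) ∨
      (1 ≤ u ∧ u ≤ v ∧ v ≤ M ∧ l = rowPath 1 1 u ++ (rowPath 2 u v ++ rowPath 3 v M)) := by
  rw [isType1_iff (by omega), show 2 * n - 3 - 1 = M + 2 by omega,
    show 2 * n - 3 = M + 3 by omega]
  constructor
  · rintro (h | h)
    · obtain ⟨N, rfl⟩ : ∃ N, M = N + 1 := Nat.exists_eq_succ_of_ne_zero fun hM0 =>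
        absurd h.le.2 (by simp [hM0])
      obtain ⟨u, v, -, huv, hv, rfl⟩ := isPath_next_next_row_iff (p := 1) (x := 0) |>.1 h
      exact ⟨u, v, Or.inl ⟨huv, Nat.lt_succ_of_le hv, rfl⟩⟩
    · obtain ⟨u, v, hu, huv, hv, rfl⟩ := isPath_next_next_row_iff (p := 1) (x := 1) |>.1 h
      exact ⟨u, v, Or.inr ⟨hu, huv, hv, rfl⟩⟩
  · rintro ⟨u, v, ⟨huv, hv, rfl⟩ | ⟨hu, huv, hv, rfl⟩⟩
    · rw [show M + 2 = M - 1 + 3 by omega]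
      exact Or.inl (isPath_next_next_row_iff (p := 1).2
        ⟨u, v, Nat.zero_le u, huv, Nat.le_sub_one_of_lt hv, rfl⟩)
    · exact Or.inr (isPath_next_next_row_iff (p := 1).2 ⟨u, v, hu, huv, hv, rfl⟩)

theorem disjoint_append_rowPath_iff {u v : ℕ} (hu : u ≤ M + 1) :
    (rowPath 1 0 u ++ rowPath 2 u (M + 1)).Disjoint (rowPath 2 0 v ++ rowPath 3 v M) ↔ v < u := by
  constructor
  · intro hd
    by_contra! huv
    exact @hd (2, u + 3) (List.mem_append_right _ (mem_rowPath.2 ⟨rfl, le_rfl, by omega⟩))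
      (List.mem_append_left _ (mem_rowPath.2 ⟨rfl, by omega, by omega⟩))
  · intro hvu β hβ hβ'
    simp only [List.mem_append, mem_rowPath] at hβ hβ'
    omega

theorem isType2_three_iff (hM : 2 * n = M + 6) : IsType2 n 3 l l' ↔
    (l = rowPath 1 0 (M + 2) ∧ l' = rowPath 2 0 (M + 1)) ∨
      ∃ u v, v < u ∧ u ≤ M + 1 ∧ v ≤ M ∧ l = rowPath 1 0 u ++ rowPath 2 u (M + 1) ∧
        l' = rowPath 2 0 v ++ rowPath 3 v M := by
  have h1 : 2 * n - 1 = M + 2 + 3 := by omega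
  have h1' : 2 * n - 1 - 1 = M + 1 + 3 := by omega
  have h2 : 2 * n - 2 = M + 1 + 3 := by omega
  have h2' : 2 * n - 2 - 1 = M + 3 := by omega
  rw [isType2_iff (by omega)]
  constructor
  · rintro ⟨j, hj, hj3, h, h', hd⟩
    obtain rfl | rfl : j = 1 ∨ j = 2 := by omega
    · rw [h1] at h
      rw [h1'] at h'
      exact Or.inl ⟨(isPath_same_row_iff (x := 0).1 h).2, (isPath_same_row_iff (x := 0).1 h').2⟩
    · rw [h2] at h
      rw [h2'] at h'
      obtain ⟨u, -, hu, rfl⟩ := isPath_next_row_iff (p := 1) (x := 0) |>.1 h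
      obtain ⟨v, -, hv, rfl⟩ := isPath_next_row_iff (p := 2) (x := 0) |>.1 h'
      exact Or.inr ⟨u, v, (disjoint_append_rowPath_iff hu).1 hd, hu, hv, rfl, rfl⟩
  · rintro (⟨rfl, rfl⟩ | ⟨u, v, hvu, hu, hv, rfl, rfl⟩)
    · refine ⟨1, le_rfl, by omega, ?_, ?_, fun β hβ hβ' => ?_⟩
      · exact h1 ▸ isPath_rowPath 1 (Nat.zero_le (M + 2))
      · exact h1' ▸ isPath_rowPath 2 (Nat.zero_le (M + 1))
      · rw [mem_rowPath] at hβ hβ'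
        omega
    · refine ⟨2, by omega, by omega, ?_, ?_, (disjoint_append_rowPath_iff hu).2 hvu⟩
      · exact h2 ▸ isPath_next_row_iff (p := 1).2 ⟨u, Nat.zero_le u, hu, rfl⟩
      · exact h2' ▸ isPath_next_row_iff (p := 2).2 ⟨v, Nat.zero_le v, hv, rfl⟩

theorem sum_rowPath_one_append_two (s : ℕ × ℕ → ℕ) (M : ℕ) :
    (((rowPath 1 0 (M + 2) ++ rowPath 2 0 (M + 1)).map s).sum : ℤ) =
      rowSum s 1 (M + 3) + rowSum s 2 (M + 2) := by
  simp only [List.map_append, List.sum_append, Nat.cast_add, sum_rowPath, Nat.zero_le,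
    rowSum_zero, sub_zero, add_assoc, Nat.reduceAdd]

theorem sum_doublePath (s : ℕ × ℕ → ℕ) {u v : ℕ} (hu : u ≤ M + 1) (hv : v ≤ M) :
    (((rowPath 1 0 u ++ rowPath 2 u (M + 1) ++ (rowPath 2 0 v ++ rowPath 3 v M)).map s).sum : ℤ) =
      rowSum s 1 (u + 1) + (rowSum s 2 (M + 2) - rowSum s 2 u) +
        (rowSum s 2 (v + 1) + (rowSum s 3 (M + 1) - rowSum s 3 v)) := by
  simp only [List.map_append, List.sum_append, Nat.cast_add, sum_rowPath, hu, hv, Nat.zero_le,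
    rowSum_zero, sub_zero, add_assoc, Nat.reduceAdd]

theorem mem_SD_three_iff (hM : 2 * n = M + 6) : s ∈ SD n 3 m ↔
    (∀ β, ¬ inR n 3 β → s β = 0) ∧
    (∀ u v, u ≤ v → v < M → singleSum s 0 u v (M - 1) ≤ m) ∧
    (∀ u v, 1 ≤ u → u ≤ v → v ≤ M → singleSum s 1 u v M ≤ m) ∧
    rowSum s 1 (M + 3) + rowSum s 2 (M + 2) ≤ (m * cB n 3 : ℕ) ∧
    ∀ u v, v < u → u ≤ M + 1 → v ≤ M →
      rowSum s 1 (u + 1) + (rowSum s 2 (M + 2) - rowSum s 2 u) +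
        (rowSum s 2 (v + 1) + (rowSum s 3 (M + 1) - rowSum s 3 v)) ≤ (m * cB n 3 : ℕ) := by
  constructor
  · rintro ⟨hs, hsingle, hpair⟩
    refine ⟨hs, fun u v huv hv => ?_, fun u v hu huv hv => ?_, ?_, fun u v hvu hu hv => ?_⟩
    · rw [← sum_singlePath s (Nat.zero_le u) huv (Nat.le_sub_one_of_lt hv)]
      exact Nat.cast_le.2 (hsingle _ ((isType1_three_iff hM).2 ⟨u, v, Or.inl ⟨huv, hv, rfl⟩⟩))
    · rw [← sum_singlePath s hu huv hv]
      exact Nat.cast_le.2 (hsingle _ ((isType1_three_iff hM).2 ⟨u, v, Or.inr ⟨hu, huv, hv, rfl⟩⟩))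
    · exact sum_rowPath_one_append_two s M ▸ Nat.cast_le.2
        (hpair _ _ ((isType2_three_iff hM).2 (Or.inl ⟨rfl, rfl⟩)))
    · rw [← sum_doublePath s hu hv]
      exact Nat.cast_le.2
        (hpair _ _ ((isType2_three_iff hM).2 (Or.inr ⟨u, v, hvu, hu, hv, rfl, rfl⟩)))
  · rintro ⟨hs, hlower, hupper, hrow, hpair⟩
    refine ⟨hs, fun l hl => ?_, fun l l' hl => ?_⟩
    · obtain ⟨u, v, ⟨huv, hv, rfl⟩ | ⟨hu, huv, hv, rfl⟩⟩ := (isType1_three_iff hM).1 hl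
      · rw [← Int.ofNat_le, sum_singlePath s (Nat.zero_le u) huv (Nat.le_sub_one_of_lt hv)]
        exact hlower u v huv hv
      · rw [← Int.ofNat_le, sum_singlePath s hu huv hv]
        exact hupper u v hu huv hv
    · obtain ⟨rfl, rfl⟩ | ⟨u, v, hvu, hu, hv, rfl, rfl⟩ := (isType2_three_iff hM).1 hl
      · exact Int.ofNat_le.1 ((sum_rowPath_one_append_two s M).trans_le hrow)
      · exact Int.ofNat_le.1 ((sum_doublePath s hu hv).trans_le (hpair u v hvu hu hv))

end Membership

section RankAtLeastFour

variable {n L m r k : ℕ} {s s₁ s₂ : ℕ × ℕ → ℕ}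

theorem mem_SD_three_iff_pathBound (hL : 2 * n = L + 7) : s ∈ SD n 3 m ↔
    (∀ β, ¬ inR n 3 β → s β = 0) ∧ PathBound L m s ∧
      rowSum s 1 (L + 4) + rowSum s 2 (L + 3) ≤ 2 * m := by
  have hc : cB n 3 = 2 := by rw [cB, if_neg (by omega)]
  rw [mem_SD_three_iff (M := L + 1) hL, hc, Nat.cast_mul, Nat.cast_ofNat,
    mul_comm (m : ℤ)]
  simp only [add_assoc, Nat.reduceAdd, Nat.add_sub_cancel, Nat.lt_succ_iff]
  constructor
  · rintro ⟨hs, hlower, hupper, hrow, hdouble⟩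
    exact ⟨hs, ⟨⟨hlower, hupper⟩, fun u v hvu hu hv => by
      simpa only [doubleSum, add_assoc] using hdouble u v hvu hu hv⟩, hrow⟩
  · rintro ⟨hs, hbound, hrow⟩
    exact ⟨hs, hbound.lower, hbound.upper, hrow, fun u v hvu hu hv => by
      simpa only [doubleSum, add_assoc] using hbound.double u v hvu hu hv⟩

theorem PathBound.rowSum_add_le (hs : PathBound L m s) :
    rowSum s 1 (L + 3) + rowSum s 2 (L + 3) ≤ 2 * m := by
  have hdouble := hs.double (L + 2) (L + 1) (by omega) le_rfl le_rfl
  have hmono := rowSum_mono s 3 (show L + 1 ≤ L + 2 by omega)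
  simp only [doubleSum, add_assoc, Nat.reduceAdd] at hdouble
  omega

theorem PathBound.exists_add_rowSum_le (h₁ : PathBound L r s₁) (h₂ : PathBound L k s₂)
    (h : rowSum (s₁ + s₂) 1 (L + 4) + rowSum (s₁ + s₂) 2 (L + 3) ≤ 2 * (r + k : ℕ)) :
    ∃ t₁ t₂, t₁ + t₂ = s₁ + s₂ ∧
      (PathBound L r t₁ ∧ rowSum t₁ 1 (L + 4) + rowSum t₁ 2 (L + 3) ≤ 2 * r) ∧
      (PathBound L k t₂ ∧ rowSum t₂ 1 (L + 4) + rowSum t₂ 2 (L + 3) ≤ 2 * k) := by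
  simp only [rowSum_add, rowSum_succ _ 1 (L + 3), Pi.add_apply, add_assoc, Nat.reduceAdd] at h
  obtain ⟨t₁, t₂, hst, hoff₁, hoff₂, hle₁, hle₂⟩ :=
    exists_redistribute s₁ s₂ (1, L + 6) h₁.rowSum_add_le h₂.rowSum_add_le (by omega)
  have hbound {l : ℕ} {s t : ℕ × ℕ → ℕ} (hs : PathBound L l s) (hoff : ∀ γ ≠ (1, L + 6), t γ = s γ)
      (hle : rowSum s 1 (L + 3) + rowSum s 2 (L + 3) + t (1, L + 6) ≤ 2 * l) :
      PathBound L l t ∧ rowSum t 1 (L + 4) + rowSum t 2 (L + 3) ≤ 2 * l := by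
    have hagree (p k : ℕ) (hk : k < L + 3) : s (p, k + 3) = t (p, k + 3) :=
      (hoff _ (by simp; omega)).symm
    rw [rowSum_congr (hagree 1), rowSum_congr (hagree 2), add_right_comm] at hle
    exact ⟨hs.congr hagree, (rowSum_succ t 1 (L + 3)).symm ▸ hle⟩
  exact ⟨t₁, t₂, hst, hbound h₁ hoff₁ hle₁, hbound h₂ hoff₂ hle₂⟩

theorem splits_SD_three_of_four_le (hn : 4 ≤ n) (hm : 0 < m) (hs : s ∈ SD n 3 m) :
    Splits (fun k t => t ∈ SD n 3 k) m s := by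
  obtain ⟨L, hL⟩ : ∃ L, 2 * n = L + 7 := ⟨2 * n - 7, by omega⟩
  obtain ⟨hsupp, hbound, hrow⟩ := (mem_SD_three_iff_pathBound hL).1 hs
  obtain ⟨r, k, s₁, s₂, hr, rfl, rfl, h₁, h₂⟩ := hbound.splits hm
  obtain ⟨t₁, t₂, hst, ⟨hb₁, hr₁⟩, hb₂, hr₂⟩ := h₁.exists_add_rowSum_le h₂ hrow
  have hzero (β : ℕ × ℕ) (hβ : ¬ inR n 3 β) := eq_zero_of_add_eq hst (hsupp β hβ)
  exact ⟨r, k, t₁, t₂, hr, rfl, hst,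
    (mem_SD_three_iff_pathBound hL).2 ⟨fun β hβ => (hzero β hβ).1, hb₁, hr₁⟩,
    (mem_SD_three_iff_pathBound hL).2 ⟨fun β hβ => (hzero β hβ).2, hb₂, hr₂⟩⟩

end RankAtLeastFour

section RankThree

variable {m : ℕ} {s : ℕ × ℕ → ℕ}

/-- The sum of the four entries common to the two type 2 paths for `n = 3`, plus the entry at `γ`.
The two paths are recovered by taking `γ = (1, 5)` and `γ = (3, 3)`. -/
def commonSum (s : ℕ × ℕ → ℕ) (γ : ℕ × ℕ) : ℕ :=
  s (1, 3) + s (1, 4) + s (2, 3) + s (2, 4) + s γ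

theorem commonSum_add (s t : ℕ × ℕ → ℕ) (γ : ℕ × ℕ) :
    commonSum (s + t) γ = commonSum s γ + commonSum t γ := by
  simp only [commonSum, Pi.add_apply]
  ring

theorem mem_SD_three_three_iff : s ∈ SD 3 3 m ↔
    (∀ β, ¬ inR 3 3 β → s β = 0) ∧ ∀ γ, γ = (1, 5) ∨ γ = (3, 3) → commonSum s γ ≤ m := by
  have hc : cB 3 3 = 1 := by simp [cB]
  rw [mem_SD_three_iff (M := 0) rfl, hc, mul_one]
  refine and_congr_right fun _ => ?_
  simp only [forall_eq_or_imp, forall_eq, commonSum, rowSum_succ, rowSum_zero, zero_add,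
    Nat.reduceAdd]
  constructor
  · rintro ⟨-, -, hrow, hdouble⟩
    have := hdouble 1 0 one_pos le_rfl le_rfl
    simp only [rowSum_succ, rowSum_zero, zero_add, Nat.reduceAdd] at this
    omega
  · rintro ⟨h15, h33⟩
    refine ⟨fun u v _ hv => absurd hv (Nat.not_lt_zero v), fun u v hu huv hv => by omega, by omega,
      fun u v hvu hu hv => ?_⟩
    obtain rfl : u = 1 := by omega
    obtain rfl : v = 0 := by omega
    simp only [rowSum_succ, rowSum_zero, zero_add, Nat.reduceAdd]
    omega

theorem exists_le_commonSum (h : ∀ γ, γ = (1, 5) ∨ γ = (3, 3) → commonSum s γ ≤ m + 1) :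
    ∃ t ≤ s, ∀ γ, γ = (1, 5) ∨ γ = (3, 3) →
      commonSum t γ ≤ 1 ∧ commonSum s γ ≤ m + commonSum t γ := by
  by_cases hpos : ∃ β ∈ ({(1, 3), (1, 4), (2, 3), (2, 4)} : Finset (ℕ × ℕ)), 0 < s β
  · obtain ⟨β, hβ, hpos⟩ := hpos
    refine ⟨Pi.single β 1, fun γ => ?_, fun γ hγ => ?_⟩
    · obtain rfl | hγ := eq_or_ne γ β
      · simpa using Nat.succ_le_of_lt hpos
      · simp [hγ]
    · have hone : commonSum (Pi.single β 1) γ = 1 := by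
        simp only [Finset.mem_insert, Finset.mem_singleton] at hβ
        rcases hβ with rfl | rfl | rfl | rfl <;> rcases hγ with rfl | rfl <;> simp [commonSum]
      exact ⟨hone.le, (h γ hγ).trans_eq (by rw [hone])⟩
  · simp only [Finset.mem_insert, Finset.mem_singleton, exists_eq_or_imp, exists_eq_left,
      not_or, not_lt, Nat.le_zero] at hpos
    obtain ⟨h13, h14, h23, h24⟩ := hpos
    refine ⟨s ⊓ 1, inf_le_left, fun γ hγ => ?_⟩
    have hle := h γ hγ
    simp only [commonSum, Pi.inf_apply, Pi.one_apply, h13, h14, h23, h24] at hle ⊢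
    omega

theorem splits_SD_three_three (hm : 0 < m) (hs : s ∈ SD 3 3 m) :
    Splits (fun k t => t ∈ SD 3 3 k) m s := by
  obtain ⟨k, rfl⟩ : ∃ k, m = k + 1 := Nat.exists_eq_succ_of_ne_zero hm.ne'
  obtain ⟨hsupp, hsum⟩ := mem_SD_three_three_iff.1 hs
  obtain ⟨t, hts, ht⟩ := exists_le_commonSum hsum
  have hst : t + (s - t) = s := add_tsub_cancel_of_le hts
  have hzero (β : ℕ × ℕ) (hβ : ¬ inR 3 3 β) := eq_zero_of_add_eq hst (hsupp β hβ)
  refine ⟨1, k, t, s - t, Or.inl rfl, add_comm 1 k, hst,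
    mem_SD_three_three_iff.2 ⟨fun β hβ => (hzero β hβ).1, fun γ hγ => (ht γ hγ).1⟩,
    mem_SD_three_three_iff.2 ⟨fun β hβ => (hzero β hβ).2, fun γ hγ => ?_⟩⟩
  have := (ht γ hγ).2
  rw [← hst, commonSum_add] at this
  omega

end RankThree

section SD

variable {n m : ℕ} {s : ℕ × ℕ → ℕ}

theorem splits_SD_three (hn : 3 ≤ n) (hm : 0 < m) (hs : s ∈ SD n 3 m) :
    Splits (fun k t => t ∈ SD n 3 k) m s := by
  obtain rfl | hn := hn.eq_or_lt
  · exact splits_SD_three_three hm hs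
  · exact splits_SD_three_of_four_le hn hm hs

theorem SD_three_zero (hn : 3 ≤ n) : SD n 3 0 = 0 := by
  obtain ⟨M, hM⟩ : ∃ M, 2 * n = M + 6 := ⟨2 * n - 6, by omega⟩
  refine Set.eq_singleton_iff_unique_mem.2 ⟨zero_mem_SD n 3 0, fun s hs => ?_⟩
  obtain ⟨hsupp, -, -, hrow, hdouble⟩ := (mem_SD_three_iff hM).1 hs
  have h3 := hdouble (M + 1) 0 (Nat.succ_pos M) le_rfl (Nat.zero_le M)
  rw [zero_mul, Nat.cast_zero] at hrow h3
  have h1 := rowSum_nonneg s 1 (M + 3)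
  have h2 := rowSum_nonneg s 2 (M + 2)
  have hsub := rowSum_mono s 2 (show M + 1 ≤ M + 2 by omega)
  have h1' := rowSum_nonneg s 1 (M + 1 + 1)
  have h2' := rowSum_nonneg s 2 (0 + 1)
  rw [rowSum_zero] at h3
  funext β
  by_cases hβ : inR n 3 β
  swap
  · exact hsupp β hβ
  obtain ⟨p, q⟩ := β
  obtain ⟨hp, hp3, hq, hpq⟩ := hβ
  dsimp only at hp hp3 hq hpq
  obtain ⟨k, rfl⟩ := Nat.exists_eq_add_of_le' hq
  rw [Pi.zero_apply]
  obtain rfl | rfl | rfl : p = 1 ∨ p = 2 ∨ p = 3 := by omega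
  · have := le_rowSum s 1 (show k < M + 3 by omega)
    omega
  · have := le_rowSum s 2 (show k < M + 2 by omega)
    omega
  · have := le_rowSum s 3 (show k < M + 1 by omega)
    omega

end SD

/-- for `i = 3` and `n ≥ 3`, `S(D, m·ω₃)` is the `⌊m/2⌋`-fold Minkowski
sum of `S(D, 2·ω₃)` with itself, plus one additional summand `S(D, ω₃)` when `m` is
odd (the `0`-fold Minkowski sum being `{0} = 0`). -/
theorem SD_omega3_building_blocks (n : ℕ) (hn : 3 ≤ n) (m : ℕ) :
    SD n 3 m =
      (∑ _j ∈ Finset.range (m / 2), SD n 3 2) +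
        (if m % 2 = 1 then SD n 3 1 else 0) := by
  exact eq_buildingBlocks (SD_three_zero hn) (SD_add_SD_subset n 3)
    (fun _ hm _ hs => splits_SD_three hn hm hs) m
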